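/- For q ≥ p ≥ 1 with q ≥ 2, the local antimagic chromatic number of K_{p,q} equals q+1 if q > p = 1; equals 2 if q > p ≥ 2 and p ≡ q (mod 2); and equals 3 otherwise. -/

import Mathlib

open scoped BigOperators

/-- The induced vertex sum: sum of labels of edges incident to `v`. -/
noncomputable def vertexSum {V : Type*} (G : SimpleGraph V) (f : Sym2 V → ℕ) (v : V) : ℕ :=
  ∑ᶠ e ∈ G.incidenceSet v, f e

/-- `f` is a local antimagic labeling of `G`: a bijection from the edge set onto
`{1, …, |E(G)|}` such that adjacent vertices get distinct induced sums. -/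
def IsLocalAntimagic {V : Type*} (G : SimpleGraph V) (f : Sym2 V → ℕ) : Prop :=
  Set.BijOn f G.edgeSet (Set.Icc 1 G.edgeSet.ncard) ∧
  ∀ u v, G.Adj u v → vertexSum G f u ≠ vertexSum G f v

/-- Number of distinct induced vertex labels of the labeling `f`. -/
noncomputable def colorCount {V : Type*} (G : SimpleGraph V) (f : Sym2 V → ℕ) : ℕ :=
  (Set.range (vertexSum G f)).ncard

/-- The local antimagic chromatic number. -/
noncomputable def chiLA {V : Type*} (G : SimpleGraph V) : ℕ :=
  sInf { n | ∃ f, IsLocalAntimagic G f ∧ colorCount G f = n }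

/-- The join `G ∨ Oₙ` of `G` with the empty graph on `n` vertices. -/
def joinEmpty {V : Type*} (G : SimpleGraph V) (n : ℕ) : SimpleGraph (V ⊕ Fin n) :=
  SimpleGraph.fromRel (fun x y =>
    (∃ a b, x = Sum.inl a ∧ y = Sum.inl b ∧ G.Adj a b) ∨ (x.isLeft ∧ y.isRight))


/-- Centered rectangle: entries are distinct integers of absolute value `< pq`, of the parity
of `pq - 1`. -/
def CRect (p q : ℕ) (M : ℕ → ℕ → ℤ) : Prop :=
  (∀ i j, i < p → j < q → |M i j| < (p : ℤ) * q ∧ (M i j + (p : ℤ) * q) % 2 = 1) ∧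
  (∀ i j i' j', i < p → j < q → i' < p → j' < q → M i j = M i' j' → i = i' ∧ j = j')

theorem edgeSet_Kpq (p q : ℕ) : (completeBipartiteGraph (Fin p) (Fin q)).edgeSet =
    Set.range (fun x : Fin p × Fin q => s(Sum.inl x.1, Sum.inr x.2)) := by
  ext e
  induction e using Sym2.ind with
  | _ a b =>
    rcases a with a | a <;> rcases b with b | b <;>
      simp [completeBipartiteGraph]

theorem edge_inj (p q : ℕ) :
    Function.Injective (fun x : Fin p × Fin q => (s(Sum.inl x.1, Sum.inr x.2) : Sym2 (Fin p ⊕ Fin q))) := by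
  rintro ⟨a, b⟩ ⟨c, d⟩ h
  simpa [Sym2.eq_iff] using h

theorem edge_ncard (p q : ℕ) : (completeBipartiteGraph (Fin p) (Fin q)).edgeSet.ncard = p * q := by
  rw [edgeSet_Kpq, ← Set.image_univ, Set.ncard_image_of_injective _ (edge_inj p q)]
  simp [Set.ncard_univ]

theorem vertexSum_inl (p q : ℕ) (f : Sym2 (Fin p ⊕ Fin q) → ℕ) (i : Fin p) :
    vertexSum (completeBipartiteGraph (Fin p) (Fin q)) f (Sum.inl i) =
      ∑ j : Fin q, f s(Sum.inl i, Sum.inr j) := by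
  have h : (completeBipartiteGraph (Fin p) (Fin q)).incidenceSet (Sum.inl i) =
      (fun j : Fin q => (s(Sum.inl i, Sum.inr j) : Sym2 (Fin p ⊕ Fin q))) '' Set.univ := by
    ext e
    rw [SimpleGraph.incidenceSet, edgeSet_Kpq]
    simp only [Set.mem_ofPred_eq, Set.mem_range, Prod.exists, Set.image_univ]
    constructor
    · rintro ⟨⟨a, b, rfl⟩, h⟩
      simp at h
      subst h
      exact ⟨b, rfl⟩
    · rintro ⟨j, rfl⟩
      exact ⟨⟨i, j, rfl⟩, by simp⟩
  unfold vertexSum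
  rw [h, finsum_mem_image, finsum_mem_univ, finsum_eq_sum_of_fintype]
  intro a _ b _ hab
  simpa [Sym2.eq_iff] using hab

theorem vertexSum_inr (p q : ℕ) (f : Sym2 (Fin p ⊕ Fin q) → ℕ) (j : Fin q) :
    vertexSum (completeBipartiteGraph (Fin p) (Fin q)) f (Sum.inr j) =
      ∑ i : Fin p, f s(Sum.inl i, Sum.inr j) := by
  have h : (completeBipartiteGraph (Fin p) (Fin q)).incidenceSet (Sum.inr j) =
      (fun i : Fin p => (s(Sum.inl i, Sum.inr j) : Sym2 (Fin p ⊕ Fin q))) '' Set.univ := by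
    ext e
    rw [SimpleGraph.incidenceSet, edgeSet_Kpq]
    simp only [Set.mem_ofPred_eq, Set.mem_range, Prod.exists, Set.image_univ]
    constructor
    · rintro ⟨⟨a, b, rfl⟩, h⟩
      simp at h
      subst h
      exact ⟨a, rfl⟩
    · rintro ⟨i, rfl⟩
      exact ⟨⟨i, j, rfl⟩, by simp⟩
  unfold vertexSum
  rw [h, finsum_mem_image, finsum_mem_univ, finsum_eq_sum_of_fintype]
  intro a _ b _ hab
  simpa [Sym2.eq_iff] using hab

theorem isLA_iff (p q : ℕ) (f : Sym2 (Fin p ⊕ Fin q) → ℕ) :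
    IsLocalAntimagic (completeBipartiteGraph (Fin p) (Fin q)) f ↔
    ((∀ i j, f s(Sum.inl i, Sum.inr j) ∈ Set.Icc 1 (p * q)) ∧
      Function.Injective (fun x : Fin p × Fin q => f s(Sum.inl x.1, Sum.inr x.2))) ∧
    ∀ i j, ∑ j' : Fin q, f s(Sum.inl i, Sum.inr j') ≠ ∑ i' : Fin p, f s(Sum.inl i', Sum.inr j) := by
  unfold IsLocalAntimagic
  rw [edge_ncard]
  apply and_congr
  · rw [edgeSet_Kpq]
    constructor
    · rintro ⟨h1, h2, h3⟩
      refine ⟨fun i j => h1 ⟨(i, j), rfl⟩, fun x y hxy => ?_⟩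
      exact edge_inj p q (h2 ⟨x, rfl⟩ ⟨y, rfl⟩ hxy)
    · rintro ⟨h1, h2⟩
      have hmap : Set.MapsTo f (Set.range (fun x : Fin p × Fin q => (s(Sum.inl x.1, Sum.inr x.2) : Sym2 (Fin p ⊕ Fin q)))) (Set.Icc 1 (p * q)) := by
        rintro _ ⟨x, rfl⟩
        exact h1 x.1 x.2
      have hinj : Set.InjOn f (Set.range (fun x : Fin p × Fin q => (s(Sum.inl x.1, Sum.inr x.2) : Sym2 (Fin p ⊕ Fin q)))) := by
        rintro _ ⟨x, rfl⟩ _ ⟨y, rfl⟩ hxy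
        rw [show x = y from h2 hxy]
      refine ⟨hmap, hinj, ?_⟩
      have := Set.eq_of_subset_of_ncard_le (Set.image_subset_iff.2 hmap) ?_ (Set.finite_Icc _ _)
      · exact this.symm.subset
      · rw [hinj.ncard_image, ← edgeSet_Kpq, edge_ncard, Set.ncard_eq_toFinset_card']
        simp
  · constructor
    · intro h i j
      rw [← vertexSum_inl, ← vertexSum_inr]
      exact h _ _ (by simp [completeBipartiteGraph])
    · rintro h (u | u) (v | v) huv
      · simp [completeBipartiteGraph] at huv
      · rw [vertexSum_inl, vertexSum_inr]; exact h u v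
      · rw [vertexSum_inl, vertexSum_inr]; exact (h v u).symm
      · simp [completeBipartiteGraph] at huv

/-- Any centered rectangle whose row and column sums are separated bounds `chiLA`. -/
theorem chi_le (p q : ℕ) (M : ℕ → ℕ → ℤ) (hM : CRect p q M) (T : Finset ℤ)
    (hsep : ∀ i j, i < p → j < q → ∑ j' ∈ Finset.range q, M i j' + q * ((p : ℤ) * q + 1) ≠
      ∑ i' ∈ Finset.range p, M i' j + p * ((p : ℤ) * q + 1))
    (hr : ∀ i, i < p → ∑ j' ∈ Finset.range q, M i j' + q * ((p : ℤ) * q + 1) ∈ T)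
    (hc : ∀ j, j < q → ∑ i' ∈ Finset.range p, M i' j + p * ((p : ℤ) * q + 1) ∈ T) :
    ∃ f, IsLocalAntimagic (completeBipartiteGraph (Fin p) (Fin q)) f ∧
      colorCount (completeBipartiteGraph (Fin p) (Fin q)) f ≤ T.card := by
  obtain ⟨hM1, hM2⟩ := hM
  let L : ℕ → ℕ → ℕ := fun i j => ((M i j + (p : ℤ) * q + 1) / 2).toNat
  have hL : ∀ i j, i < p → j < q → 2 * (L i j : ℤ) = M i j + (p : ℤ) * q + 1 ∧ 1 ≤ L i j ∧ L i j ≤ p * q := by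
    intro i j hi hj
    obtain ⟨h1, h2⟩ := hM1 i j hi hj
    rw [abs_lt] at h1
    simp only [L]
    have hpq : ((p * q : ℕ) : ℤ) = (p : ℤ) * q := by push_cast; ring
    generalize (p : ℤ) * q = N at *
    omega
  let g : (Fin p ⊕ Fin q) → (Fin p ⊕ Fin q) → ℕ := fun a b =>
    Sum.elim (fun i : Fin p => Sum.elim (fun _ : Fin p => 0) (fun j : Fin q => L i j) b)
      (fun j : Fin q => Sum.elim (fun i : Fin p => L i j) (fun _ : Fin q => 0) b) a
  let f : Sym2 (Fin p ⊕ Fin q) → ℕ := Sym2.lift ⟨g, by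
    rintro (a | a) (b | b) <;> rfl⟩
  have hf : ∀ (i : Fin p) (j : Fin q), f s(Sum.inl i, Sum.inr j) = L i j := fun i j => rfl
  have hrow : ∀ i : Fin p, 2 * ((∑ j : Fin q, f s(Sum.inl i, Sum.inr j) : ℕ) : ℤ) =
      ∑ j' ∈ Finset.range q, M i j' + q * ((p : ℤ) * q + 1) := by
    intro i
    rw [Finset.sum_range]
    push_cast
    rw [Finset.mul_sum, Finset.sum_congr rfl (fun j _ => by rw [hf, (hL i j i.2 j.2).1, add_assoc])]
    rw [Finset.sum_add_distrib]
    simp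
  have hcol : ∀ j : Fin q, 2 * ((∑ i : Fin p, f s(Sum.inl i, Sum.inr j) : ℕ) : ℤ) =
      ∑ i' ∈ Finset.range p, M i' j + p * ((p : ℤ) * q + 1) := by
    intro j
    rw [Finset.sum_range]
    push_cast
    rw [Finset.mul_sum, Finset.sum_congr rfl (fun i _ => by rw [hf, (hL i j i.2 j.2).1, add_assoc])]
    rw [Finset.sum_add_distrib]
    simp
  refine ⟨f, (isLA_iff p q f).2 ⟨⟨?_, ?_⟩, ?_⟩, ?_⟩
  · intro i j
    rw [hf]
    exact (hL i j i.2 j.2).2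
  · rintro ⟨i, j⟩ ⟨i', j'⟩ h
    have h' : L i j = L i' j' := h
    have h1 := (hL i j i.2 j.2).1
    have h2 := (hL i' j' i'.2 j'.2).1
    rw [h'] at h1
    have := hM2 i j i' j' i.2 j.2 i'.2 j'.2 (by linarith)
    exact Prod.ext (Fin.ext this.1) (Fin.ext this.2)
  · intro i j h
    apply hsep i j i.2 j.2
    rw [← hrow, ← hcol, h]
  · unfold colorCount
    rw [← Set.ncard_coe_finset]
    apply Set.ncard_le_ncard_of_injOn (fun x : ℕ => 2 * (x : ℤ))
    · rintro _ ⟨u | u, rfl⟩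
      · rw [vertexSum_inl]
        have := hr u u.2
        rw [← hrow] at this
        exact this
      · rw [vertexSum_inr]
        have := hc u u.2
        rw [← hcol] at this
        exact this
    · intro a _ b _ hab
      simpa using hab

theorem transp (p q : ℕ) (M : ℕ → ℕ → ℤ) (hM : CRect p q M) : CRect q p (fun i j => M j i) := by
  obtain ⟨h1, h2⟩ := hM
  refine ⟨fun i j hi hj => ?_, fun i j i' j' hi hj hi' hj' h => ?_⟩
  · have := h1 j i hj hi
    rwa [mul_comm (q : ℤ)]
  · have := h2 j i j' i' hj hi hj' hi' h
    exact ⟨this.2, this.1⟩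

/-- Lower bound 2. -/
theorem color_ge_two (p q : ℕ) (hp : 1 ≤ p) (hq : 1 ≤ q) (f : Sym2 (Fin p ⊕ Fin q) → ℕ)
    (hf : IsLocalAntimagic (completeBipartiteGraph (Fin p) (Fin q)) f) :
    2 ≤ colorCount (completeBipartiteGraph (Fin p) (Fin q)) f := by
  unfold colorCount
  have hne := hf.2 (Sum.inl ⟨0, hp⟩) (Sum.inr ⟨0, hq⟩) (by simp [completeBipartiteGraph])
  rw [← Set.ncard_pair hne]
  apply Set.ncard_le_ncard
  · rintro x (rfl | rfl) <;> exact ⟨_, rfl⟩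
  · exact Set.finite_range _

theorem color_two (p q : ℕ) (hp : 1 ≤ p) (hq : 1 ≤ q) (f : Sym2 (Fin p ⊕ Fin q) → ℕ)
    (hf : IsLocalAntimagic (completeBipartiteGraph (Fin p) (Fin q)) f)
    (h2 : colorCount (completeBipartiteGraph (Fin p) (Fin q)) f ≤ 2) :
    p < q ∧ p % 2 = q % 2 ∨ q < p ∧ p % 2 = q % 2 := by
  have hne := hf.2 (Sum.inl ⟨0, hp⟩) (Sum.inr ⟨0, hq⟩) (by simp [completeBipartiteGraph])
  have hset := Set.eq_of_subset_of_ncard_le (s := {vertexSum (completeBipartiteGraph (Fin p) (Fin q)) f (Sum.inl ⟨0, hp⟩), vertexSum (completeBipartiteGraph (Fin p) (Fin q)) f (Sum.inr ⟨0, hq⟩)}) (t := Set.range (vertexSum (completeBipartiteGraph (Fin p) (Fin q)) f))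
    (by rintro x (rfl | rfl) <;> exact ⟨_, rfl⟩) (by rw [Set.ncard_pair hne]; exact h2) (Set.finite_range _)
  set R := vertexSum (completeBipartiteGraph (Fin p) (Fin q)) f (Sum.inl ⟨0, hp⟩) with hR
  set C := vertexSum (completeBipartiteGraph (Fin p) (Fin q)) f (Sum.inr ⟨0, hq⟩) with hC
  have hrow : ∀ i : Fin p, ∑ j : Fin q, f s(Sum.inl i, Sum.inr j) = R := by
    intro i
    rw [← vertexSum_inl]
    have h : vertexSum (completeBipartiteGraph (Fin p) (Fin q)) f (Sum.inl i) ∈ ({R, C} : Set ℕ) := by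
      rw [hset]; exact ⟨_, rfl⟩
    rcases h with h | h
    · exact h
    · exact absurd h (hf.2 (Sum.inl i) (Sum.inr ⟨0, hq⟩) (by simp [completeBipartiteGraph]))
  have hcol : ∀ j : Fin q, ∑ i : Fin p, f s(Sum.inl i, Sum.inr j) = C := by
    intro j
    rw [← vertexSum_inr]
    have h : vertexSum (completeBipartiteGraph (Fin p) (Fin q)) f (Sum.inr j) ∈ ({R, C} : Set ℕ) := by
      rw [hset]; exact ⟨_, rfl⟩
    rcases h with h | h
    · exact absurd h.symm (hf.2 (Sum.inl ⟨0, hp⟩) (Sum.inr j) (by simp [completeBipartiteGraph]))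
    · exact h
  have htot1 : ∑ i : Fin p, ∑ j : Fin q, f s(Sum.inl i, Sum.inr j) = p * R := by
    simp [hrow]
  have htot2 : ∑ i : Fin p, ∑ j : Fin q, f s(Sum.inl i, Sum.inr j) = q * C := by
    rw [Finset.sum_comm]; simp [hcol]
  have htot3 : 2 * ∑ i : Fin p, ∑ j : Fin q, f s(Sum.inl i, Sum.inr j) = (p * q) * (p * q + 1) := by
    obtain ⟨⟨h1, h2⟩, _⟩ := (isLA_iff p q f).1 hf
    have himg : Finset.univ.image (fun x : Fin p × Fin q => f s(Sum.inl x.1, Sum.inr x.2)) = Finset.Icc 1 (p * q) := by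
      apply Finset.eq_of_subset_of_card_le
      · intro y hy
        simp only [Finset.mem_image, Finset.mem_univ, true_and] at hy
        obtain ⟨x, rfl⟩ := hy
        have := h1 x.1 x.2
        simpa using this
      · rw [Finset.card_image_of_injective _ h2]
        simp
    have hs : ∑ y ∈ Finset.Icc 1 (p * q), y = ∑ i : Fin p, ∑ j : Fin q, f s(Sum.inl i, Sum.inr j) := by
      rw [← himg, Finset.sum_image (fun a _ b _ h => h2 h), Fintype.sum_prod_type]
    rw [← hs]
    have := Finset.sum_range_id_mul_two (p * q + 1)
    rw [Finset.range_eq_Ico, Finset.sum_eq_sum_Ico_succ_bot (by omega)] at this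
    have e : Finset.Ico (0 + 1) (p * q + 1) = Finset.Icc 1 (p * q) := by
      ext; simp
    rw [e] at this
    simp at this
    linarith
  have e1 : 2 * R = q * (p * q + 1) := by
    have : p * (2 * R) = p * (q * (p * q + 1)) := by
      rw [← mul_assoc p q, ← htot3, htot1]; ring
    exact Nat.eq_of_mul_eq_mul_left hp this
  have e2 : 2 * C = p * (p * q + 1) := by
    have : q * (2 * C) = q * (p * (p * q + 1)) := by
      rw [← mul_assoc q p, mul_comm q p, ← htot3, htot2]; ring
    exact Nat.eq_of_mul_eq_mul_left hq this
  have hpq : p ≠ q := by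
    rintro rfl
    exact hne (by omega)
  have hpar : p % 2 = q % 2 := by
    have m1 := congrArg (· % 2) e1
    have m2 := congrArg (· % 2) e2
    rcases Nat.mod_two_eq_zero_or_one p with a | a <;> rcases Nat.mod_two_eq_zero_or_one q with b | b <;>
      simp [Nat.mul_mod, Nat.add_mod, a, b] at m1 m2 ⊢
  omega

/-- half arrays -/
def Half (g n : ℕ) (ρ : ℕ → ℤ) : Prop :=
  ∃ H : ℕ → ℕ → ℤ,
    (∀ i j, i < g → j < n → |H i j| < 2 * (g : ℤ) * n ∧ H i j % 2 = 1) ∧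
    (∀ i j i' j', i < g → j < n → i' < g → j' < n → |H i j| = |H i' j'| → i = i' ∧ j = j') ∧
    (∀ i, i < g → ∑ j ∈ Finset.range n, H i j = ρ i)

/-- rectangles with column sums zero -/
theorem half_rect (g n : ℕ) (ρ : ℕ → ℤ) (h : Half g n ρ) :
    ∃ M, CRect (2 * g) n M ∧ (∀ j, j < n → ∑ i ∈ Finset.range (2 * g), M i j = 0) ∧
      (∀ i, i < 2 * g → ∑ j ∈ Finset.range n, M i j = (if i % 2 = 0 then 1 else -1) * ρ (i / 2)) := by
  obtain ⟨H, h1, h2, h3⟩ := h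
  refine ⟨fun i j => (if i % 2 = 0 then 1 else -1) * H (i / 2) j, ⟨?_, ?_⟩, ?_, ?_⟩
  · intro i j hi hj
    have hh := h1 (i / 2) j (by omega) hj
    have e : (2 * g : ℕ) * (n : ℤ) = 2 * (g * n) := by push_cast; ring
    have hh1 := hh.1
    rw [mul_assoc] at hh1
    rw [e]
    dsimp only
    split_ifs
    · rw [one_mul]; exact ⟨hh1, by omega⟩
    · rw [neg_one_mul, abs_neg]; exact ⟨hh1, by omega⟩
  · intro i j i' j' hi hj hi' hj' h
    have habs : |H (i / 2) j| = |H (i' / 2) j'| := by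
      have := congrArg abs h
      simp only [abs_mul] at this
      have t : ∀ k : ℕ, |(if k % 2 = 0 then 1 else -1 : ℤ)| = 1 := by
        intro k; split_ifs <;> simp
      simpa [t] using this
    obtain ⟨e1, e2⟩ := h2 _ _ _ _ (by omega) hj (by omega) hj' habs
    have o := (h1 (i / 2) j (by omega) hj).2
    subst e2
    simp only [e1] at h o
    split_ifs at h <;> refine ⟨by omega, rfl⟩
  · intro j hj
    have : ∀ g : ℕ, ∑ i ∈ Finset.range (2 * g), ((if i % 2 = 0 then 1 else -1) * H (i / 2) j : ℤ) = 0 := by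
      intro g
      induction g with
      | zero => simp
      | succ g ih =>
        rw [show 2 * (g + 1) = 2 * g + 1 + 1 by ring, Finset.sum_range_succ, Finset.sum_range_succ, ih]
        have a1 : (2 * g) % 2 = 0 := by omega
        have a2 : (2 * g + 1) % 2 = 1 := by omega
        have a3 : (2 * g) / 2 = g := by omega
        have a4 : (2 * g + 1) / 2 = g := by omega
        simp [a2, a4]
    exact this g
  · intro i hi
    rw [← Finset.mul_sum, h3 _ (by omega)]

theorem half_ext (g n : ℕ) (ρ ε : ℕ → ℤ) (hε : ∀ i, ε i = 1 ∨ ε i = -1) (h : Half g n ρ) :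
    Half g (n + 2) (fun i => ρ i + 2 * ε i) := by
  obtain ⟨H, h1, h2, h3⟩ := h
  have key : ∀ i j, i < g → j < n + 2 → j < n ∨
    ((n ≤ j)) := by intros; omega
  let K : ℕ → ℕ → ℤ := fun i j => if j < n then H i j else if j = n then -ε i * (2 * g * n + 4 * i + 1)
      else ε i * (2 * g * n + 4 * i + 3)
  have gn : (0 : ℤ) ≤ g * n := by positivity
  have vabs : ∀ i j, i < g → j < n + 2 → (j < n ∧ |K i j| < 2 * (g * n) ∧ K i j = H i j) ∨
      (j = n ∧ |K i j| = 2 * (g * n) + 4 * i + 1) ∨ (j = n + 1 ∧ |K i j| = 2 * (g * n) + 4 * i + 3) := by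
    intro i j hi hj
    by_cases c : j < n
    · left
      have := (h1 i j hi c).1
      simp only [K, c, if_true]
      rw [mul_assoc] at this
      exact ⟨trivial, this, trivial⟩
    · right
      have ab : |ε i| = 1 := by rcases hε i with e | e <;> simp [e]
      by_cases c' : j = n
      · left
        refine ⟨c', ?_⟩
        simp only [K, c, c', if_true, lt_irrefl, if_false, abs_mul, abs_neg, ab, one_mul]
        rw [abs_of_nonneg (by positivity)]; ring
      · right
        refine ⟨by omega, ?_⟩
        simp only [K, c, c', if_false, abs_mul, ab, one_mul]
        rw [abs_of_nonneg (by positivity)]; ring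
  refine ⟨K, ?_, ?_, ?_⟩
  · intro i j hi hj
    have e : 2 * (g : ℤ) * (n + 2 : ℕ) = 2 * (g * n) + 4 * g := by push_cast; ring
    rw [e]
    constructor
    · rcases vabs i j hi hj with h | h | h <;> omega
    · rcases vabs i j hi hj with h | h | h
      · rw [h.2.2]; exact (h1 i j hi h.1).2
      · have := h.2
        rcases abs_cases (K i j) with a | a <;> omega
      · have := h.2
        rcases abs_cases (K i j) with a | a <;> omega
  · intro i j i' j' hi hj hi' hj' e
    rcases vabs i j hi hj with h | h | h <;> rcases vabs i' j' hi' hj' with h' | h' | h'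
    · rw [h.2.2, h'.2.2] at e
      exact h2 _ _ _ _ hi h.1 hi' h'.1 e
    all_goals (have := h.2; have := h'.2; omega)
  · intro i hi
    rw [Finset.sum_range_succ, Finset.sum_range_succ]
    have : ∑ x ∈ Finset.range n, K i x = ρ i := by
      rw [← h3 i hi]
      apply Finset.sum_congr rfl
      intro x hx
      simp [K, Finset.mem_range.1 hx]
    rw [this]
    simp only [K, lt_irrefl, if_false, if_true, show ¬ (n + 1 < n) by omega, show ¬ (n + 1 = n) by omega]
    ring

theorem half_zero (g : ℕ) : Half g 0 (fun _ => 0) :=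
  ⟨fun _ _ => 0, by intros; omega, by intros; omega, by simp⟩

theorem half_even (g k : ℕ) : Half g (2 * k) (fun _ => 2 * k) := by
  induction k with
  | zero => exact half_zero g
  | succ k ih =>
    have := half_ext g (2 * k) _ (fun _ => 1) (by simp) ih
    have e : (fun _ : ℕ => 2 * ((k + 1 : ℕ) : ℤ)) = fun _ => 2 * (k : ℤ) + 2 * 1 := by
      funext; push_cast; ring
    rw [e]
    exact this

theorem half_three (g : ℕ) : Half g 3 (fun _ => 1) := by
  let s1 : ℕ := (g + 1) / 2
  let s2 : ℕ := g / 2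
  refine ⟨fun i j => if i % 2 = 0 then (if j = 0 then -(2 * i + 1) else if j = 1 then
      -(2 * ((g : ℤ) + s1 - (i / 2 : ℕ)) - 1) else 2 * ((g : ℤ) + s1 + 1 + (i / 2 : ℕ)) - 1) else
      (if j = 0 then (2 * i + 1) else if j = 1 then
      (2 * ((g : ℤ) + 2 * s1 + s2 - (i / 2 : ℕ)) - 1) else -(2 * ((g : ℤ) + 2 * s1 + s2 + 1 + (i / 2 : ℕ)) - 1)), ?_, ?_, ?_⟩
  · intro i j hi hj
    simp only [s1, s2]
    rw [abs_lt]
    split_ifs <;> refine ⟨⟨?_, ?_⟩, ?_⟩ <;> omega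
  · intro i j i' j' hi hj hi' hj' e
    have hj : j = 0 ∨ j = 1 ∨ j = 2 := by omega
    have hj' : j' = 0 ∨ j' = 1 ∨ j' = 2 := by omega
    simp only [s1, s2, abs_eq_abs] at e
    rcases hj with rfl | rfl | rfl <;> rcases hj' with rfl | rfl | rfl <;> 
    simp at e ⊢ <;> split_ifs at e <;> omega
  · intro i hi
    simp only [Finset.sum_range_succ, Finset.sum_range_zero, s1, s2]
    simp
    split_ifs <;> omega

theorem half_odd (g k : ℕ) : Half g (2 * k + 3) (fun _ => 1) ∨ Half g (2 * k + 3) (fun _ => -1) := by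
  induction k with
  | zero => left; exact half_three g
  | succ k ih =>
    rcases ih with ih | ih
    · right
      have := half_ext g (2 * k + 3) _ (fun _ => -1) (by simp) ih
      exact this
    · left
      have := half_ext g (2 * k + 3) _ (fun _ => 1) (by simp) ih
      exact this

/-- zero row and column sums -/
def Magic (p q : ℕ) : Prop := ∃ M, CRect p q M ∧ (∀ j, j < q → ∑ i ∈ Finset.range p, M i j = 0) ∧
      (∀ i, i < p → ∑ j ∈ Finset.range q, M i j = 0)

theorem magic_transp (p q : ℕ) (h : Magic p q) : Magic q p := by
  obtain ⟨M, h1, h2, h3⟩ := h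
  exact ⟨fun i j => M j i, transp p q M h1, h3, h2⟩

theorem magic_of_half (g n : ℕ) (h : Half g n (fun _ => 0)) : Magic (2 * g) n := by
  obtain ⟨M, h1, h2, h3⟩ := half_rect g n _ h
  refine ⟨M, h1, h2, fun i hi => ?_⟩
  rw [h3 i hi]; simp

theorem half_ext4 (g n : ℕ) (h : Half g n (fun _ => 0)) : Half g (n + 4) (fun _ => 0) := by
  have := half_ext g (n + 2) _ (fun _ => -1) (by simp) (half_ext g n _ (fun _ => 1) (by simp) h)
  simpa using this

theorem half_26 : Half 1 6 (fun _ => 0) := by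
  refine ⟨fun _ j => if j = 0 then 1 else if j = 1 then 3 else if j = 2 then 5 else if j = 3 then 9
    else if j = 4 then -7 else -11, ?_, ?_, ?_⟩
  · intro i j hi hj
    dsimp only
    split_ifs <;> norm_num
  · intro i j i' j' hi hj hi' hj' e
    dsimp only at e
    refine ⟨by omega, ?_⟩
    split_ifs at e <;> first | omega | norm_num at e
  · intro i hi
    simp [Finset.sum_range_succ]


theorem magic_add4 (g k m : ℕ) (hm : Half g m (fun _ => 0)) : Half g (m + 4 * k) (fun _ => 0) := by
  induction k with
  | zero => exact hm
  | succ k ih => exact half_ext4 _ _ ih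


theorem half_row6 (g : ℕ) (h : Half g 6 (fun _ => 0)) : Half (g + 2) 6 (fun _ => 0) := by
  obtain ⟨H, h1, h2, h3⟩ := h
  let t0 : ℕ → ℤ := fun j => if j = 0 then 0 else if j = 1 then 2 else if j = 2 then 6 else
    if j = 3 then 1 else if j = 4 then 3 else 4
  let t1 : ℕ → ℤ := fun j => if j = 0 then 5 else if j = 1 then 9 else if j = 2 then 11 else
    if j = 3 then 7 else if j = 4 then 8 else 10
  let K : ℕ → ℕ → ℤ := fun i j => if i < g then H i j else if i = g then
      (if j < 3 then 12 * g + 2 * t0 j + 1 else - (12 * g + 2 * t0 j + 1)) else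
      (if j < 3 then 12 * g + 2 * t1 j + 1 else - (12 * g + 2 * t1 j + 1))
  have v : ∀ i j, i < g + 2 → j < 6 → (i < g ∧ |K i j| < 12 * g ∧ K i j = H i j) ∨
      (i = g ∧ |K i j| = 12 * g + 2 * t0 j + 1) ∨ (i = g + 1 ∧ |K i j| = 12 * g + 2 * t1 j + 1) := by
    intro i j hi hj
    have p0 : 0 ≤ t0 j := by simp only [t0]; split_ifs <;> norm_num
    have p1 : 0 ≤ t1 j := by simp only [t1]; split_ifs <;> norm_num
    by_cases c : i < g
    · left
      have := (h1 i j c hj).1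
      simp only [K, c, if_true]
      push_cast at this
      exact ⟨trivial, by linarith, trivial⟩
    · right
      by_cases c' : i = g
      · left
        refine ⟨c', ?_⟩
        simp only [K, c', lt_irrefl, if_false, if_true]
        split_ifs
        · rw [abs_of_nonneg (by positivity)]
        · rw [abs_neg, abs_of_nonneg (by positivity)]
      · right
        refine ⟨by omega, ?_⟩
        simp only [K, c, c', if_false]
        split_ifs
        · rw [abs_of_nonneg (by positivity)]
        · rw [abs_neg, abs_of_nonneg (by positivity)]
  have tb0 : ∀ j, 0 ≤ t0 j ∧ t0 j < 12 := by
    intro j; simp only [t0]; split_ifs <;> norm_num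
  have tb1 : ∀ j, 0 ≤ t1 j ∧ t1 j < 12 := by
    intro j; simp only [t1]; split_ifs <;> norm_num
  refine ⟨K, ?_, ?_, ?_⟩
  · intro i j hi hj
    have := tb0 j
    have := tb1 j
    rcases v i j hi hj with h | h | h
    · refine ⟨by push_cast; linarith, ?_⟩
      rw [h.2.2]; exact (h1 i j h.1 hj).2
    · have h' := h.2
      constructor
      · push_cast; linarith
      · rcases abs_cases (K i j) with a | a <;> omega
    · have h' := h.2
      constructor
      · push_cast; linarith
      · rcases abs_cases (K i j) with a | a <;> omega
  · intro i j i' j' hi hj hi' hj' e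
    have tb0 := tb0 j
    have tb1 := tb1 j
    rcases v i j hi hj with h | h | h <;> rcases v i' j' hi' hj' with h' | h' | h'
    · rw [h.2.2, h'.2.2] at e
      exact h2 _ _ _ _ h.1 hj h'.1 hj' e
    · exfalso; have := h.2; have := h'.2; have : 0 ≤ t0 j' := (‹∀ j, 0 ≤ t0 j ∧ t0 j < 12› j').1; omega
    · exfalso; have := h.2; have := h'.2; have : 0 ≤ t1 j' := (‹∀ j, 0 ≤ t1 j ∧ t1 j < 12› j').1; omega
    · exfalso; have := h.2; have := h'.2; omega
    · have h := h.2
      have h' := h'.2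
      have q : t0 j = t0 j' := by omega
      refine ⟨by omega, ?_⟩
      simp only [t0] at q
      interval_cases j <;> interval_cases j' <;> first | rfl | (exfalso; revert q; norm_num)
    · exfalso
      have h := h.2
      have h' := h'.2
      have q : t0 j = t1 j' := by omega
      simp only [t0, t1] at q
      interval_cases j <;> interval_cases j' <;> (revert q; norm_num)
    · exfalso; have := h.2; have := h'.2; omega
    · exfalso
      have h := h.2
      have h' := h'.2
      have q : t1 j = t0 j' := by omega
      simp only [t0, t1] at q
      interval_cases j <;> interval_cases j' <;> (revert q; norm_num)
    · have h := h.2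
      have h' := h'.2
      have q : t1 j = t1 j' := by omega
      refine ⟨by omega, ?_⟩
      simp only [t1] at q
      interval_cases j <;> interval_cases j' <;> first | rfl | (exfalso; revert q; norm_num)
  · intro i hi
    by_cases c : i < g
    · rw [← h3 i c]
      simp [K, c]
    · by_cases c' : i = g
      · simp [K, c', Finset.sum_range_succ, t0]
        ring
      · simp [K, c, c', Finset.sum_range_succ, t1]
        ring

theorem half_col6 (k : ℕ) : Half (2 * k + 1) 6 (fun _ => 0) := by
  induction k with
  | zero => exact half_26
  | succ k ih => exact half_row6 _ ih

theorem magic_even (p q : ℕ) (hp : 2 ≤ p) (hpq : p < q) (h1 : p % 2 = 0) (h2 : q % 2 = 0) :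
    Magic p q := by
  obtain ⟨a, rfl⟩ : ∃ a, p = 2 * a := ⟨p / 2, by omega⟩
  obtain ⟨b, rfl⟩ : ∃ b, q = 2 * b := ⟨q / 2, by omega⟩
  rcases Nat.even_or_odd' b with ⟨c, rfl | rfl⟩
  · apply magic_of_half
    have := magic_add4 a c 0 (half_zero a)
    rwa [show 2 * (2 * c) = 0 + 4 * c by ring]
  · rcases Nat.even_or_odd' a with ⟨d, rfl | rfl⟩
    · apply magic_transp
      apply magic_of_half
      have := magic_add4 (2 * c + 1) d 0 (half_zero _)
      rwa [show 2 * (2 * d) = 0 + 4 * d by ring]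
    · apply magic_of_half
      have := magic_add4 (2 * d + 1) (c - 1) 6 (half_col6 d)
      rwa [show 2 * (2 * c + 1) = 6 + 4 * (c - 1) by omega]

/-- a magic rectangle gives a 2-coloring -/
theorem two_of_magic (p q : ℕ) (hpq : p < q) (h : Magic p q) :
    ∃ f, IsLocalAntimagic (completeBipartiteGraph (Fin p) (Fin q)) f ∧
      colorCount (completeBipartiteGraph (Fin p) (Fin q)) f ≤ 2 := by
  obtain ⟨M, h1, h2, h3⟩ := h
  have := chi_le p q M h1 {(q : ℤ) * ((p : ℤ) * q + 1), (p : ℤ) * ((p : ℤ) * q + 1)} ?_ ?_ ?_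
  · obtain ⟨f, hf, hc⟩ := this
    exact ⟨f, hf, hc.trans Finset.card_le_two⟩
  · intro i j hi hj
    rw [h2 j hj, h3 i hi, zero_add, zero_add]
    intro e
    have : (q : ℤ) = p := mul_right_cancel₀ (by positivity) e
    omega
  · intro i hi
    rw [h3 i hi]; simp
  · intro j hj
    rw [h2 j hj]; simp

/-- one family of sums in `{a, b}`, the other constant `c` -/
theorem three_of_rows (p q : ℕ) (M : ℕ → ℕ → ℤ) (h1 : CRect p q M) (a b c : ℤ)
    (hr : ∀ i, i < p → ∑ j ∈ Finset.range q, M i j = a ∨ ∑ j ∈ Finset.range q, M i j = b)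
    (hc : ∀ j, j < q → ∑ i ∈ Finset.range p, M i j = c)
    (ha : a + q * ((p : ℤ) * q + 1) ≠ c + p * ((p : ℤ) * q + 1))
    (hb : b + q * ((p : ℤ) * q + 1) ≠ c + p * ((p : ℤ) * q + 1)) :
    ∃ f, IsLocalAntimagic (completeBipartiteGraph (Fin p) (Fin q)) f ∧
      colorCount (completeBipartiteGraph (Fin p) (Fin q)) f ≤ 3 := by
  have := chi_le p q M h1 {a + q * ((p : ℤ) * q + 1), b + q * ((p : ℤ) * q + 1),
    c + p * ((p : ℤ) * q + 1)} ?_ ?_ ?_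
  · obtain ⟨f, hf, hc⟩ := this
    exact ⟨f, hf, hc.trans Finset.card_le_three⟩
  · intro i j hi hj
    rw [hc j hj]
    rcases hr i hi with e | e <;> rw [e] <;> assumption
  · intro i hi
    rcases hr i hi with e | e <;> rw [e] <;> simp
  · intro j hj
    rw [hc j hj]; simp

theorem three_of_cols (p q : ℕ) (M : ℕ → ℕ → ℤ) (h1 : CRect p q M) (a b c : ℤ)
    (hr : ∀ i, i < p → ∑ j ∈ Finset.range q, M i j = c)
    (hc : ∀ j, j < q → ∑ i ∈ Finset.range p, M i j = a ∨ ∑ i ∈ Finset.range p, M i j = b)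
    (ha : a + p * ((p : ℤ) * q + 1) ≠ c + q * ((p : ℤ) * q + 1))
    (hb : b + p * ((p : ℤ) * q + 1) ≠ c + q * ((p : ℤ) * q + 1)) :
    ∃ f, IsLocalAntimagic (completeBipartiteGraph (Fin p) (Fin q)) f ∧
      colorCount (completeBipartiteGraph (Fin p) (Fin q)) f ≤ 3 := by
  have := chi_le p q M h1 {a + p * ((p : ℤ) * q + 1), b + p * ((p : ℤ) * q + 1),
    c + q * ((p : ℤ) * q + 1)} ?_ ?_ ?_
  · obtain ⟨f, hf, hc⟩ := this
    exact ⟨f, hf, hc.trans Finset.card_le_three⟩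
  · intro i j hi hj
    rw [hr i hi]
    rcases hc j hj with e | e <;> rw [e] <;> symm <;> assumption
  · intro i hi
    rw [hr i hi]; simp
  · intro j hj
    rcases hc j hj with e | e <;> rw [e] <;> simp

theorem three_even_square (m : ℕ) (hm : 2 ≤ m) (he : m % 2 = 0) :
    ∃ f, IsLocalAntimagic (completeBipartiteGraph (Fin m) (Fin m)) f ∧
      colorCount (completeBipartiteGraph (Fin m) (Fin m)) f ≤ 3 := by
  obtain ⟨g, rfl⟩ : ∃ a, m = 2 * a := ⟨m / 2, by omega⟩
  obtain ⟨M, h1, h2, h3⟩ := half_rect g (2 * g) _ (half_even g g)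
  refine three_of_rows _ _ M h1 (2 * g) (-(2 * g)) 0 ?_ h2 ?_ ?_
  · intro i hi
    rw [h3 i hi]
    split_ifs <;> simp
  · intro e
    have := add_right_cancel e
    omega
  · intro e
    have := add_right_cancel e
    omega

theorem sep_aux (p q : ℕ) (h1 : 1 ≤ p) (h2 : 1 ≤ q) (hpq : p ≠ q) (a : ℤ) (ha : a = 1 ∨ a = -1) :
    a + q * ((p : ℤ) * q + 1) ≠ 0 + p * ((p : ℤ) * q + 1) := by
  intro e
  have hN : (1 : ℤ) ≤ (p : ℤ) * q := by
    have : 1 ≤ p * q := Nat.mul_pos h1 h2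
    exact_mod_cast this
  have hd : ((p : ℤ) * q + 1) ∣ a := ⟨(p : ℤ) - q, by linarith⟩
  have hd1 : ((p : ℤ) * q + 1) ∣ 1 := by
    rcases ha with rfl | rfl
    · exact hd
    · simpa using hd
  have := Int.le_of_dvd (by norm_num) hd1
  linarith

theorem three_half_odd (p q : ℕ) (hp : 2 ≤ p) (hq : 2 ≤ q) (he : p % 2 = 0) (ho : q % 2 = 1) :
    ∃ M, CRect p q M ∧ (∀ j, j < q → ∑ i ∈ Finset.range p, M i j = 0) ∧
      (∀ i, i < p → ∑ j ∈ Finset.range q, M i j = 1 ∨ ∑ j ∈ Finset.range q, M i j = -1) := by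
  obtain ⟨g, rfl⟩ : ∃ a, p = 2 * a := ⟨p / 2, by omega⟩
  obtain ⟨k, rfl⟩ : ∃ a, q = 2 * a + 3 := ⟨(q - 3) / 2, by omega⟩
  rcases half_odd g k with h | h <;> obtain ⟨M, h1, h2, h3⟩ := half_rect g _ _ h <;>
    refine ⟨M, h1, h2, fun i hi => ?_⟩ <;> rw [h3 i hi] <;> split_ifs <;> simp

theorem three_parity (p q : ℕ) (hp : 2 ≤ p) (hq : 2 ≤ q) (h : p % 2 ≠ q % 2) :
    ∃ f, IsLocalAntimagic (completeBipartiteGraph (Fin p) (Fin q)) f ∧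
      colorCount (completeBipartiteGraph (Fin p) (Fin q)) f ≤ 3 := by
  rcases Nat.mod_two_eq_zero_or_one p with e | e
  · obtain ⟨M, h1, h2, h3⟩ := three_half_odd p q hp hq e (by omega)
    refine three_of_rows _ _ M h1 1 (-1) 0 h3 h2 ?_ ?_ <;>
    · apply sep_aux <;> first | omega | simp
  · obtain ⟨M, h1, h2, h3⟩ := three_half_odd q p hq hp (by omega) (by omega)
    refine three_of_cols _ _ _ (transp q p M h1) 1 (-1) 0 h2 h3 ?_ ?_ <;>
    · rw [mul_comm (p : ℤ) (q : ℤ)]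
      apply sep_aux <;> first | omega | simp

theorem mul_add_inj (m y x y' x' : ℤ) (hx : 0 ≤ x) (hx1 : x < m) (hx' : 0 ≤ x') (hx1' : x' < m)
    (h : m * y + x = m * y' + x') : y = y' ∧ x = x' := by
  have e : x - x' = m * (y' - y) := by linarith
  have hd : m ∣ x - x' := ⟨_, e⟩
  have : x - x' = 0 := Int.eq_zero_of_abs_lt_dvd hd (by rw [abs_lt]; constructor <;> linarith)
  have hm : m ≠ 0 := by linarith
  refine ⟨?_, by linarith⟩
  rw [this] at e
  rcases mul_eq_zero.1 e.symm with h | h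
  · exact absurd h hm
  · linarith

/-- cyclic x coordinate -/
def cx (m i j : ℕ) : ℕ := if i + j < m then i + j else i + j - m
/-- cyclic y coordinate -/
def cy (m i j : ℕ) : ℕ := if i ≤ j then j - i else j + m - i

theorem cx_sum (m i : ℕ) (hi : i < m) : ∑ j ∈ Finset.range m, (cx m i j : ℤ) = ∑ j ∈ Finset.range m, (j : ℤ) := by
  refine Finset.sum_nbij' (fun j => cx m i j) (fun j => cy m i j) ?_ ?_ ?_ ?_ ?_ <;>
    simp only [Finset.mem_range, cx, cy] <;> intro j hj <;> first | trivial | (split_ifs <;> omega)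

theorem cy_sum (m i : ℕ) (hi : i < m) : ∑ j ∈ Finset.range m, (cy m i j : ℤ) = ∑ j ∈ Finset.range m, (j : ℤ) := by
  refine Finset.sum_nbij' (fun j => cy m i j) (fun j => cx m i j) ?_ ?_ ?_ ?_ ?_ <;>
    simp only [Finset.mem_range, cx, cy] <;> intro j hj <;> first | trivial | (split_ifs <;> omega)

theorem cx_sum' (m j : ℕ) (hj : j < m) : ∑ i ∈ Finset.range m, (cx m i j : ℤ) = ∑ j ∈ Finset.range m, (j : ℤ) := by
  rw [← cx_sum m j hj]
  apply Finset.sum_congr rfl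
  intro i _
  simp only [cx, add_comm]

theorem cy_sum' (m j : ℕ) (hj : j < m) : ∑ i ∈ Finset.range m, (cy m i j : ℤ) = ∑ j ∈ Finset.range m, (j : ℤ) := by
  refine Finset.sum_nbij' (fun i => cy m i j) (fun i => cy m i j) ?_ ?_ ?_ ?_ ?_ <;>
    simp only [Finset.mem_range, cy] <;> intro i hi <;> first | trivial | (split_ifs <;> omega)

theorem sum_range_int (m : ℕ) : 2 * ∑ j ∈ Finset.range m, (j : ℤ) = m * (m - 1) := by
  induction m with
  | zero => simp
  | succ m ih => rw [Finset.sum_range_succ, mul_add, ih]; push_cast; ring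

theorem three_odd_square (m : ℕ) (hm : 3 ≤ m) (he : m % 2 = 1) :
    ∃ f, IsLocalAntimagic (completeBipartiteGraph (Fin m) (Fin m)) f ∧
      colorCount (completeBipartiteGraph (Fin m) (Fin m)) f ≤ 3 := by
  let X : ℕ → ℕ → ℕ := fun i j => if i = 0 then cx m 1 j else cx m i j
  let Y : ℕ → ℕ → ℕ := fun i j => if i = 0 then cx m 1 j else cy m i j
  let M : ℕ → ℕ → ℤ := fun i j => 2 * (m * Y i j + X i j + 1) - m * m - 1
  have hX : ∀ i j, i < m → j < m → X i j < m := by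
    intro i j hi hj
    simp only [X, cx]; split_ifs <;> omega
  have hY : ∀ i j, i < m → j < m → Y i j < m := by
    intro i j hi hj
    simp only [Y, cx, cy]; split_ifs <;> omega
  have hS := sum_range_int m
  have hcr : CRect m m M := by
    refine ⟨?_, ?_⟩
    · intro i j hi hj
      have a := hX i j hi hj
      have b := hY i j hi hj
      have a' : (X i j : ℤ) + 1 ≤ m := by exact_mod_cast a
      have b' : (Y i j : ℤ) + 1 ≤ m := by exact_mod_cast b
      constructor
      · rw [abs_lt]
        have : (m : ℤ) * (Y i j + 1) ≤ m * m := mul_le_mul_of_nonneg_left b' (by positivity)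
        have : (0 : ℤ) ≤ m * Y i j := by positivity
        simp only [M]
        constructor <;> linarith
      · simp only [M]
        generalize (m : ℤ) * Y i j + X i j + 1 = z
        generalize (m : ℤ) * m = w
        omega
    · intro i j i' j' hi hj hi' hj' e
      have a := hX i j hi hj
      have a1 := hX i' j' hi' hj'
      obtain ⟨e1, e2⟩ := mul_add_inj m (Y i j) (X i j) (Y i' j') (X i' j') (by omega) (by omega) (by omega) (by omega)
        (by simp only [M] at e; linarith)
      have e1 : Y i j = Y i' j' := by exact_mod_cast e1
      have e2 : X i j = X i' j' := by exact_mod_cast e2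
      simp only [X, Y, cx, cy] at e1 e2
      by_cases c : i = 0 <;> by_cases c' : i' = 0 <;> simp only [c, c', if_true, if_false] at e1 e2 <;>
        split_ifs at e1 e2 <;> omega
  have hrow : ∀ i, i < m → ∑ j ∈ Finset.range m, M i j = 0 := by
    intro i hi
    have s1 : ∑ j ∈ Finset.range m, (X i j : ℤ) = ∑ j ∈ Finset.range m, (j : ℤ) := by
      by_cases c : i = 0
      · simp only [X, c, if_true]; exact cx_sum m 1 (by omega)
      · simp only [X, c, if_false]; exact cx_sum m i hi
    have s2 : ∑ j ∈ Finset.range m, (Y i j : ℤ) = ∑ j ∈ Finset.range m, (j : ℤ) := by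
      by_cases c : i = 0
      · simp only [Y, c, if_true]; exact cx_sum m 1 (by omega)
      · simp only [Y, c, if_false]; exact cy_sum m i hi
    simp only [M, Finset.sum_sub_distrib, ← Finset.mul_sum, Finset.sum_add_distrib, s1, s2,
      Finset.sum_const, Finset.card_range, nsmul_eq_mul]
    linear_combination (m + 1 : ℤ) * hS
  have hcol : ∀ j, j < m → ∑ i ∈ Finset.range m, M i j = 2 * (m + 1) * ((cx m 1 j : ℤ) - j) := by
    intro j hj
    obtain ⟨l, rfl⟩ : ∃ l, m = l + 1 := ⟨m - 1, by omega⟩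
    have s1 : ∑ i ∈ Finset.range (l + 1), (X i j : ℤ) = ∑ j ∈ Finset.range (l + 1), (j : ℤ) + cx (l + 1) 1 j - j := by
      rw [← cx_sum' (l + 1) j hj, Finset.sum_range_succ', Finset.sum_range_succ' _ l]
      simp [X, cx, hj]
      ring
    have s2 : ∑ i ∈ Finset.range (l + 1), (Y i j : ℤ) = ∑ j ∈ Finset.range (l + 1), (j : ℤ) + cx (l + 1) 1 j - j := by
      rw [← cy_sum' (l + 1) j hj, Finset.sum_range_succ', Finset.sum_range_succ' _ l]
      simp [Y, cy]
      ring
    simp only [M, Finset.sum_sub_distrib, ← Finset.mul_sum, Finset.sum_add_distrib, s1, s2,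
      Finset.sum_const, Finset.card_range, nsmul_eq_mul]
    linear_combination ((l + 1 : ℕ) + 1 : ℤ) * hS
  refine three_of_cols m m M hcr (2 * (m + 1) * 1) (2 * (m + 1) * (1 - m)) 0 hrow ?_ ?_ ?_
  · intro j hj
    rw [hcol j hj]
    by_cases c : j + 1 < m
    · left
      rw [cx, if_pos (by omega)]
      push_cast; ring
    · right
      have : j + 1 = m := by omega
      rw [cx, if_neg (by omega), ← this]
      simp
      ring
  · intro e
    have := add_right_cancel e
    have : (0 : ℤ) < m := by omega
    nlinarith
  · intro e
    have := add_right_cancel e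
    have : (3 : ℤ) ≤ m := by omega
    nlinarith

theorem sub_sum (N : ℕ) : ∀ s t : ℕ, s ≤ N → (s : ℤ) * (s - 1) ≤ 2 * t →
    2 * (t : ℤ) ≤ s * (s - 1) + 2 * s * (N - s) →
    ∃ J ⊆ Finset.range N, J.card = s ∧ ∑ j ∈ J, j = t := by
  induction N with
  | zero =>
    intro s t hs h1 h2
    obtain rfl : s = 0 := by omega
    refine ⟨∅, by simp, rfl, ?_⟩
    simp at h2 ⊢
    omega
  | succ N ih =>
    intro s t hs h1 h2
    by_cases c : s = N + 1
    · subst c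
      refine ⟨Finset.range (N + 1), subset_rfl, by simp, ?_⟩
      have := sum_range_int (N + 1)
      have e : 2 * (t : ℤ) = ((N + 1 : ℕ) : ℤ) * ((N + 1 : ℕ) - 1) := by
        apply le_antisymm
        · simpa using h2
        · exact h1
      zify
      linarith
    · by_cases c2 : 2 * (t : ℤ) ≤ s * (s - 1) + 2 * s * (N - s)
      · obtain ⟨J, hJ, a, b⟩ := ih s t (by omega) h1 c2
        refine ⟨J, hJ.trans (by simp), a, b⟩
      · have hs0 : s ≠ 0 := by
          rintro rfl
          simp at h2 c2
          omega
        obtain ⟨r, rfl⟩ : ∃ r, s = r + 1 := ⟨s - 1, by omega⟩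
        have hr : (r : ℤ) + 1 ≤ N := by
          have : r + 1 ≤ N := by omega
          exact_mod_cast this
        obtain ⟨w, hw⟩ := Int.even_mul_succ_self (r : ℤ)
        push_cast at h1 h2 c2
        have c3 : ((r : ℤ) + 1) * (r + 1 - 1) + 2 * (r + 1) * (N - (r + 1)) + 2 ≤ 2 * t := by
          have a1 : ((r : ℤ) + 1) * (r + 1 - 1) + 2 * (r + 1) * (N - (r + 1)) =
            2 * (w + (r + 1) * (N - (r + 1))) := by linear_combination hw
          rw [a1] at c2 ⊢
          omega
        have hrN : (0 : ℤ) ≤ r * (N - (r + 1)) := mul_nonneg (by positivity) (by linarith)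
        have hlow : (r : ℤ) * (r - 1) ≤ 2 * (t - N) := by nlinarith
        have hrr : (0 : ℤ) ≤ r * (r - 1) := by
          rcases Nat.eq_zero_or_pos r with h | h
          · simp [h]
          · have : (1 : ℤ) ≤ r := by exact_mod_cast h
            exact mul_nonneg (by positivity) (by linarith)
        have htN : N ≤ t := by
          have : (N : ℤ) ≤ t := by linarith
          exact_mod_cast this
        obtain ⟨u, rfl⟩ : ∃ u, t = u + N := ⟨t - N, by omega⟩
        push_cast at hlow h2
        obtain ⟨J, hJ, a, b⟩ := ih r u (by omega) (by linarith) (by nlinarith)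
        have hn : N ∉ J := fun h => by simpa using hJ h
        refine ⟨insert N J, ?_, ?_, ?_⟩
        · intro x hx
          rcases Finset.mem_insert.1 hx with rfl | hx
          · simp
          · have := hJ hx
            simp at this ⊢; omega
        · rw [Finset.card_insert_of_notMem hn, a]
        · rw [Finset.sum_insert hn, b, add_comm]

theorem sub_sum_int (N s : ℕ) (a t : ℤ) (hs : s ≤ N)
    (h1 : (s : ℤ) * (s - 1) ≤ 2 * (t - s * a)) (h2 : 2 * (t - s * a) ≤ s * (s - 1) + 2 * s * (N - s)) :
    ∃ J ⊆ Finset.Ico a (a + N), J.card = s ∧ ∑ j ∈ J, j = t := by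
  have h0 : (0 : ℤ) ≤ s * (s - 1) := by
    rcases Nat.eq_zero_or_pos s with h | h
    · simp [h]
    · have : (1 : ℤ) ≤ s := by exact_mod_cast h
      exact mul_nonneg (by positivity) (by linarith)
  obtain ⟨u, hu⟩ : ∃ u : ℕ, (u : ℤ) = t - s * a := ⟨(t - s * a).toNat, by
    apply Int.toNat_of_nonneg; linarith⟩
  rw [← hu] at h1 h2
  obtain ⟨J, hJ, b, c⟩ := sub_sum N s u hs h1 h2
  have inj : Function.Injective (fun x : ℕ => (x : ℤ) + a) := by
    intro x y h
    simpa using h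
  refine ⟨J.image (fun x : ℕ => (x : ℤ) + a), ?_, ?_, ?_⟩
  · intro x hx
    obtain ⟨y, hy, rfl⟩ := Finset.mem_image.1 hx
    have := Finset.mem_range.1 (hJ hy)
    simp; omega
  · rw [Finset.card_image_of_injective _ inj, b]
  · rw [Finset.sum_image (fun x _ y _ h => inj h), Finset.sum_add_distrib, Finset.sum_const, b]
    have : ∑ x ∈ J, (x : ℤ) = u := by rw [← c]; push_cast; rfl
    rw [this, hu]
    simp

/-- Partial magic rectangle on rows `X` -/
def Good (m k : ℤ) (X : Finset ℤ) (c : ℤ → ℤ) : Prop := ∃ f g : ℤ → ℤ → ℤ,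
  (∀ r ∈ X, ∀ j ∈ Finset.Icc (-k) k, f r j ∈ X ∧ g r j ∈ Finset.Icc (-k) k) ∧
  (∀ r ∈ X, ∀ j ∈ Finset.Icc (-k) k, ∀ r' ∈ X, ∀ j' ∈ Finset.Icc (-k) k,
    f r j = f r' j' → g r j = g r' j' → r = r' ∧ j = j') ∧
  (∀ j ∈ Finset.Icc (-k) k, ∑ r ∈ X, (m * g r j + f r j) = c j) ∧
  (∀ r ∈ X, ∑ j ∈ Finset.Icc (-k) k, (m * g r j + f r j) = 0)

theorem good_union (m k : ℤ) (X X' : Finset ℤ) (c c' : ℤ → ℤ) (hd : Disjoint X X')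
    (h : Good m k X c) (h' : Good m k X' c') : Good m k (X ∪ X') (fun j => c j + c' j) := by
  obtain ⟨f, g, a1, a2, a3, a4⟩ := h
  obtain ⟨f', g', b1, b2, b3, b4⟩ := h'
  have hn : ∀ r ∈ X', r ∉ X := fun r h1 h2 => Finset.disjoint_left.1 hd h2 h1
  refine ⟨fun r => if r ∈ X then f r else f' r, fun r => if r ∈ X then g r else g' r, ?_, ?_, ?_, ?_⟩
  · intro r hr j hj
    rcases Finset.mem_union.1 hr with h | h
    · simp only [h, if_true]
      exact ⟨Finset.mem_union_left _ (a1 r h j hj).1, (a1 r h j hj).2⟩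
    · simp only [hn r h, if_false]
      exact ⟨Finset.mem_union_right _ (b1 r h j hj).1, (b1 r h j hj).2⟩
  · intro r hr j hj r' hr' j' hj' e1 e2
    rcases Finset.mem_union.1 hr with h | h <;> rcases Finset.mem_union.1 hr' with h' | h'
    · simp only [h, h', if_true] at e1 e2
      exact a2 r h j hj r' h' j' hj' e1 e2
    · simp only [h, hn r' h', if_true, if_false] at e1 e2
      exact absurd (a1 r h j hj).1 (by rw [e1]; exact hn _ (b1 r' h' j' hj').1)
    · simp only [h', hn r h, if_true, if_false] at e1 e2
      exact absurd (a1 r' h' j' hj').1 (by rw [← e1]; exact hn _ (b1 r h j hj).1)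
    · simp only [hn r h, hn r' h', if_false] at e1 e2
      exact b2 r h j hj r' h' j' hj' e1 e2
  · intro j hj
    dsimp only
    rw [Finset.sum_union hd, ← a3 j hj, ← b3 j hj]
    congr 1
    · apply Finset.sum_congr rfl
      intro r hr
      simp only [hr, if_true]
    · apply Finset.sum_congr rfl
      intro r hr
      simp only [hn r hr, if_false]
  · intro r hr
    rcases Finset.mem_union.1 hr with h | h
    · simp only [h, if_true]
      exact a4 r h
    · simp only [hn r h, if_false]
      exact b4 r h

theorem good_pair (m k v : ℤ) (s : ℕ) (hk : 0 ≤ k) (hv : 0 < v) (hm : m = 2 * k + 1 - 2 * s) (α β : ℤ → ℤ)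
    (ha : ∀ j ∈ Finset.Icc (-k) k, α j ∈ Finset.Icc (-k) k)
    (hb : ∀ j ∈ Finset.Icc (-k) k, β j ∈ Finset.Icc (-k) k)
    (ha' : ∀ i ∈ Finset.Icc (-k) k, ∀ j ∈ Finset.Icc (-k) k, α i = α j → i = j)
    (hb' : ∀ i ∈ Finset.Icc (-k) k, ∀ j ∈ Finset.Icc (-k) k, β i = β j → i = j)
    (sa : ∑ j ∈ Finset.Icc (-k) k, α j = 0) (sb : ∑ j ∈ Finset.Icc (-k) k, β j = 0)
    (J : Finset ℤ) (hJ : J ⊆ Finset.Icc (-k) k) (hc : J.card = s)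
    (hs : ∑ j ∈ J, (α j + β j) = v) :
    Good m k {v, -v} (fun j => m * (α j - β j)) := by
  have hne : v ≠ -v := by omega
  have hne' : ¬ (-v = v) := by omega
  have cardY : ((Finset.Icc (-k) k).card : ℤ) = 2 * k + 1 := by
    rw [Int.card_Icc, Int.toNat_of_nonneg (by omega)]; ring
  have cJ : ((Finset.Icc (-k) k \ J).card : ℤ) = 2 * k + 1 - s := by
    rw [Finset.card_sdiff_of_subset hJ, Nat.cast_sub (Finset.card_le_card hJ), cardY, hc]
  have d1 := Finset.sum_sdiff hJ (f := α)
  have d2 := Finset.sum_sdiff hJ (f := β)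
  rw [Finset.sum_add_distrib] at hs
  refine ⟨fun r j => if j ∈ J then -r else r,
    fun r j => if (if j ∈ J then -r else r) = v then α j else - β j, ?_, ?_, ?_, ?_⟩
  · intro r hr j hj
    have := ha j hj
    have := hb j hj
    simp only [Finset.mem_insert, Finset.mem_singleton, Finset.mem_Icc] at *
    constructor
    · split_ifs <;> omega
    · split_ifs <;> omega
  · intro r hr j hj r' hr' j' hj' e1 e2
    dsimp only at e1 e2
    rw [e1] at e2
    have ej : j = j' := by
      split_ifs at e2 <;>
        first | exact ha' j hj j' hj' e2 | exact hb' j hj j' hj' (neg_injective e2)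
    subst ej
    refine ⟨?_, rfl⟩
    split_ifs at e1 <;> omega
  · intro j hj
    rw [Finset.sum_pair hne]
    by_cases c : j ∈ J
    · simp only [c, if_true, hne', if_false, neg_neg]; ring
    · simp only [c, if_false, hne', if_true]; ring
  · intro r hr
    rw [← Finset.sum_sdiff hJ]
    simp only [Finset.mem_insert, Finset.mem_singleton] at hr
    rcases hr with rfl | rfl
    · have e1 : ∑ x ∈ Finset.Icc (-k) k \ J, (m * (if (if x ∈ J then -r else r) = r then α x else - β x) +
          (if x ∈ J then -r else r)) = ∑ x ∈ Finset.Icc (-k) k \ J, (m * α x + r) := by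
        apply Finset.sum_congr rfl
        intro x hx
        simp [(Finset.mem_sdiff.1 hx).2]
      have e2 : ∑ x ∈ J, (m * (if (if x ∈ J then -r else r) = r then α x else - β x) +
          (if x ∈ J then -r else r)) = ∑ x ∈ J, (-(m * β x) - r) := by
        apply Finset.sum_congr rfl
        intro x hx
        simp [hx, hne']; ring
      rw [e1, e2, Finset.sum_add_distrib, Finset.sum_sub_distrib, Finset.sum_neg_distrib, ← Finset.mul_sum,
        ← Finset.mul_sum, Finset.sum_const, Finset.sum_const, nsmul_eq_mul, nsmul_eq_mul, cJ, hc]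
      linear_combination m * d1 + m * sa - m * hs - r * hm
    · have e1 : ∑ x ∈ Finset.Icc (-k) k \ J, (m * (if (if x ∈ J then - -v else -v) = v then α x else - β x) +
          (if x ∈ J then - -v else -v)) = ∑ x ∈ Finset.Icc (-k) k \ J, (-(m * β x) - v) := by
        apply Finset.sum_congr rfl
        intro x hx
        simp [(Finset.mem_sdiff.1 hx).2, hne']; ring
      have e2 : ∑ x ∈ J, (m * (if (if x ∈ J then - -v else -v) = v then α x else - β x) +
          (if x ∈ J then - -v else -v)) = ∑ x ∈ J, (m * α x + v) := by
        apply Finset.sum_congr rfl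
        intro x hx
        simp [hx]
      rw [e1, e2, Finset.sum_add_distrib, Finset.sum_sub_distrib, Finset.sum_neg_distrib, ← Finset.mul_sum,
        ← Finset.mul_sum, Finset.sum_const, Finset.sum_const, nsmul_eq_mul, nsmul_eq_mul, cJ, hc]
      linear_combination -m * d2 - m * sb + m * hs + v * hm

theorem sum_Icc_id (k : ℤ) : ∑ j ∈ Finset.Icc (-k) k, j = 0 := by
  refine Finset.sum_involution (fun a _ => -a) ?_ ?_ ?_ ?_
  · intro a _; ring
  · intro a _ h; omega
  · intro a ha; simp only [Finset.mem_Icc] at *; omega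
  · intro a _; simp

theorem good_even (m k h v : ℤ) (s : ℕ) (h0 : 1 ≤ h) (hs : 1 ≤ s) (hk : k = h + s) (hm : m = 2 * h + 1)
    (hv : 0 < v) (hvh : v ≤ h) (he : v % 2 = 0) : Good m k {v, -v} (fun _ => 0) := by
  obtain ⟨t, rfl⟩ : ∃ t, v = 2 * t := ⟨v / 2, by omega⟩
  have hs' : (1 : ℤ) ≤ s := by exact_mod_cast hs
  obtain ⟨N, hN⟩ : ∃ N : ℕ, (N : ℤ) = 2 * k + 1 := ⟨(2 * k + 1).toNat, by omega⟩
  obtain ⟨J, hJ, hc, hsum⟩ := sub_sum_int N s (-k) t (by omega) (by subst hk; nlinarith)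
    (by rw [hN]; subst hk; nlinarith)
  have := good_pair m k (2 * t) s (by omega) hv (by omega) id id (by simp) (by simp) (by simp) (by simp)
    (sum_Icc_id k) (sum_Icc_id k) J ?_ hc ?_
  · simpa using this
  · intro x hx
    have := hJ hx
    simp only [Finset.mem_Ico, Finset.mem_Icc] at *
    omega
  · simp only [id]
    rw [Finset.sum_add_distrib, hsum]; ring

/-- cyclic shift of `[-k,k]` -/
def kap (k j : ℤ) : ℤ := if j = k then -k else j + 1

theorem kap_mem (k : ℤ) (hk : 0 ≤ k) : ∀ j ∈ Finset.Icc (-k) k, kap k j ∈ Finset.Icc (-k) k := by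
  intro j hj
  simp only [Finset.mem_Icc, kap] at *
  split_ifs <;> omega

theorem kap_inj (k : ℤ) : ∀ i ∈ Finset.Icc (-k) k, ∀ j ∈ Finset.Icc (-k) k, kap k i = kap k j → i = j := by
  intro i hi j hj e
  simp only [Finset.mem_Icc, kap] at *
  split_ifs at e <;> omega

theorem sum_perm (k : ℤ) (f : ℤ → ℤ) (h1 : ∀ j ∈ Finset.Icc (-k) k, f j ∈ Finset.Icc (-k) k)
    (h2 : ∀ i ∈ Finset.Icc (-k) k, ∀ j ∈ Finset.Icc (-k) k, f i = f j → i = j) :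
    ∑ j ∈ Finset.Icc (-k) k, f j = 0 := by
  have himg : (Finset.Icc (-k) k).image f = Finset.Icc (-k) k := by
    apply Finset.eq_of_subset_of_card_le
    · intro x hx
      obtain ⟨y, hy, rfl⟩ := Finset.mem_image.1 hx
      exact h1 y hy
    · rw [Finset.card_image_of_injOn (fun a ha b hb e => h2 a ha b hb e)]
  have := sum_Icc_id k
  rw [← himg, Finset.sum_image (fun a ha b hb e => h2 a ha b hb e)] at this
  exact this

theorem odd_subset (k h v : ℤ) (s : ℕ) (h0 : 1 ≤ h) (hs : 1 ≤ s) (hk : k = h + s)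
    (hv : 0 < v) (hvh : v ≤ h) (ho : v % 2 = 1) :
    ∃ J ⊆ Finset.Icc (-k) k, J.card = s ∧ ∑ j ∈ J, (j + kap k j) = v := by
  have hs' : (1 : ℤ) ≤ s := by exact_mod_cast hs
  obtain ⟨N, hN⟩ : ∃ N : ℕ, (N : ℤ) = 2 * k := ⟨(2 * k).toNat, by omega⟩
  have key : ∀ J ⊆ Finset.Ico (-k) (-k + N), ∑ j ∈ J, (j + kap k j) = 2 * ∑ j ∈ J, j + J.card := by
    intro J hJ
    have : ∀ j ∈ J, j + kap k j = 2 * j + 1 := by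
      intro j hj
      have := hJ hj
      simp only [Finset.mem_Ico] at this
      rw [kap, if_neg (by omega)]; ring
    rw [Finset.sum_congr rfl this, Finset.sum_add_distrib, ← Finset.mul_sum]
    simp
  rcases Nat.even_or_odd' s with ⟨c, hc | hc⟩
  · obtain ⟨t, ht⟩ : ∃ t, v = 2 * t + (s - 1 : ℕ) := ⟨(v - (s - 1 : ℕ)) / 2, by omega⟩
    have hs2 : (2 : ℤ) ≤ s := by omega
    have ht' : v = 2 * t + s - 1 := by omega
    have e : ((s - 1 : ℕ) : ℤ) = s - 1 := by omega
    obtain ⟨J, hJ, hc, hsum⟩ := sub_sum_int N (s - 1) (-k) t (by omega)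
      (by rw [e]; subst hk; nlinarith) (by rw [hN, e]; subst hk; nlinarith)
    have hkJ : k ∉ J := by
      intro h
      have := hJ h
      simp only [Finset.mem_Ico] at this
      omega
    refine ⟨insert k J, ?_, ?_, ?_⟩
    · intro x hx
      rcases Finset.mem_insert.1 hx with rfl | hx
      · simp; omega
      · have := hJ hx
        simp only [Finset.mem_Ico, Finset.mem_Icc] at *
        omega
    · rw [Finset.card_insert_of_notMem hkJ, hc]; omega
    · rw [Finset.sum_insert hkJ, key J hJ, hsum, hc, ht, kap, if_pos rfl]; ring
  · obtain ⟨t, ht⟩ : ∃ t, v = 2 * t + s := ⟨(v - s) / 2, by omega⟩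
    obtain ⟨J, hJ, hc, hsum⟩ := sub_sum_int N s (-k) t (by omega)
      (by subst hk; nlinarith) (by rw [hN]; subst hk; nlinarith)
    refine ⟨J, ?_, hc, ?_⟩
    · intro x hx
      have := hJ hx
      simp only [Finset.mem_Ico, Finset.mem_Icc] at *
      omega
    · rw [key J hJ, hsum, hc, ht]

theorem good_odd (m k h v w : ℤ) (s : ℕ) (h0 : 1 ≤ h) (hs : 1 ≤ s) (hk : k = h + s) (hm : m = 2 * h + 1)
    (hv : 0 < v) (hvh : v ≤ h) (ho : v % 2 = 1) (hw : 0 < w) (hwh : w ≤ h) (hwo : w % 2 = 1) (hvw : v ≠ w) :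
    Good m k ({v, -v} ∪ {w, -w}) (fun _ => 0) := by
  obtain ⟨J, hJ, hc, hsum⟩ := odd_subset k h v s h0 hs hk hv hvh ho
  obtain ⟨J', hJ', hc', hsum'⟩ := odd_subset k h w s h0 hs hk hw hwh hwo
  have k0 : 0 ≤ k := by omega
  have g1 := good_pair m k v s k0 hv (by omega) id (kap k) (by simp) (kap_mem k k0) (by simp) (kap_inj k)
    (sum_Icc_id k) (sum_perm k _ (kap_mem k k0) (kap_inj k)) J hJ hc hsum
  have g2 := good_pair m k w s k0 hw (by omega) (kap k) id (kap_mem k k0) (by simp) (kap_inj k) (by simp)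
    (sum_perm k _ (kap_mem k k0) (kap_inj k)) (sum_Icc_id k) J' hJ' hc' (by
      rw [← hsum']; apply Finset.sum_congr rfl; intro x _; simp only [id]; ring)
  have := good_union m k _ _ _ _ ?_ g1 g2
  · convert this using 2
    ring
  · rw [Finset.disjoint_left]
    intro x
    simp only [Finset.mem_insert, Finset.mem_singleton]
    omega

/-- partner in the standard triple -/
def bb (k a : ℤ) : ℤ := if a ≤ 0 then a + k else a - k - 1

/-- y-value of type `t` in column `a` -/
def ty (k t a : ℤ) : ℤ := if t = 1 then a else if t = -1 then bb k a else -(a + bb k a)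

theorem good_triple (m k v : ℤ) (hk : 1 ≤ k) (hv : 0 < v) (T : ℤ → ℤ → ℤ)
    (h1 : ∀ a ∈ Finset.Icc (-k) k, (T 1 a = 1 ∨ T 1 a = 0 ∨ T 1 a = -1) ∧
      (T 0 a = 1 ∨ T 0 a = 0 ∨ T 0 a = -1) ∧ (T (-1) a = 1 ∨ T (-1) a = 0 ∨ T (-1) a = -1) ∧
      T 1 a ≠ T 0 a ∧ T 1 a ≠ T (-1) a ∧ T 0 a ≠ T (-1) a)
    (h2 : ∀ r, r = 1 ∨ r = 0 ∨ r = -1 → ∑ a ∈ Finset.Icc (-k) k, T r a = 0)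
    (h3 : ∀ r, r = 1 ∨ r = 0 ∨ r = -1 → ∑ a ∈ Finset.Icc (-k) k, ty k (T r a) a = 0) :
    Good m k {0, v, -v} (fun _ => 0) := by
  have q1 : v / v = 1 := Int.ediv_self (by omega)
  have q2 : -v / v = -1 := by rw [show -v = -1 * v by ring, Int.mul_ediv_cancel _ (by omega)]
  have q0 : (0 : ℤ) / v = 0 := by simp
  have qr : ∀ r ∈ ({0, v, -v} : Finset ℤ), (r / v = 1 ∨ r / v = 0 ∨ r / v = -1) ∧ r = v * (r / v) := by
    intro r hr
    simp only [Finset.mem_insert, Finset.mem_singleton] at hr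
    rcases hr with rfl | rfl | rfl
    · simp
    · simp [q1]
    · simp [q2]
  have tT : ∀ r, r = 1 ∨ r = 0 ∨ r = -1 → ∀ a ∈ Finset.Icc (-k) k, T r a = 1 ∨ T r a = 0 ∨ T r a = -1 := by
    intro r hr a ha
    have := h1 a ha
    rcases hr with rfl | rfl | rfl
    · exact this.1
    · exact this.2.1
    · exact this.2.2.1
  refine ⟨fun r j => v * T (r / v) j, fun r j => ty k (T (r / v) j) j, ?_, ?_, ?_, ?_⟩
  · intro r hr j hj
    constructor
    · rcases tT _ (qr r hr).1 j hj with e | e | e <;> simp [e]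
    · simp only [Finset.mem_Icc] at *
      simp only [ty, bb]
      split_ifs <;> omega
  · intro r hr j hj r' hr' j' hj' e1 e2
    have e3 : T (r / v) j = T (r' / v) j' := mul_left_cancel₀ (by omega) e1
    have ej : j = j' := by
      dsimp only at e2
      rw [e3] at e2
      simp only [Finset.mem_Icc] at hj hj'
      simp only [ty, bb] at e2
      split_ifs at e2 <;> omega
    subst ej
    refine ⟨?_, rfl⟩
    have := h1 j hj
    rw [(qr r hr).2, (qr r' hr').2]
    congr 1
    rcases (qr r hr).1 with e | e | e <;> rcases (qr r' hr').1 with e' | e' | e' <;> rw [e, e'] at e3 ⊢ <;> omega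
  · intro j hj
    rw [Finset.sum_insert (by simp; omega), Finset.sum_pair (by omega)]
    dsimp only
    rw [q0, q1, q2]
    have := h1 j hj
    have x : T 0 j + T 1 j + T (-1) j = 0 := by omega
    have y : ty k (T 0 j) j + ty k (T 1 j) j + ty k (T (-1) j) j = 0 := by
      obtain ⟨a, b, c, d, e, f⟩ := this
      rcases a with a | a | a <;> rcases b with b | b | b <;> rcases c with c | c | c <;>
        simp only [a, b, c] at d e f ⊢ <;> simp [ty] at d e f ⊢ <;> ring
    linear_combination m * y + v * x
  · intro r hr
    rw [Finset.sum_add_distrib, ← Finset.mul_sum, ← Finset.mul_sum, h2 _ (qr r hr).1, h3 _ (qr r hr).1]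
    simp

theorem sum_Icc7 (c : ℤ) (f : ℤ → ℤ) : ∑ a ∈ Finset.Icc (c - 3) (c + 3), f a =
    f (c - 3) + (f (c - 2) + (f (c - 1) + (f c + (f (c + 1) + (f (c + 2) + f (c + 3)))))) := by
  have : Finset.Icc (c - 3) (c + 3) = {c - 3, c - 2, c - 1, c, c + 1, c + 2, c + 3} := by
    ext x; simp only [Finset.mem_Icc, Finset.mem_insert, Finset.mem_singleton]; omega
  rw [this]
  repeat rw [Finset.sum_insert (by simp only [Finset.mem_insert, Finset.mem_singleton]; omega)]
  rw [Finset.sum_singleton]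

/-- center of the mirror symmetry -/
def ctr (k : ℤ) : ℤ := if k % 2 = 0 then -(k / 2) else (k + 1) / 2

/-- arrangement for large `k` -/
def TT (k r a : ℤ) : ℤ :=
  if a = ctr k then r
  else if a = ctr k + 1 ∨ a = ctr k + 2 then (if r = 1 then 0 else if r = 0 then -1 else 1)
  else if a = ctr k - 1 ∨ a = ctr k - 2 then (if r = 1 then -1 else if r = 0 then 1 else 0)
  else if a = ctr k + 3 then (if r = 1 then 1 else if r = 0 then -1 else 0)
  else if a = ctr k - 3 then (if r = 1 then 0 else if r = 0 then 1 else -1)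
  else if a < - bb k a then r else -r

theorem sum_mirror (k : ℤ) (hk : 6 ≤ k) (f : ℤ → ℤ)
    (h : ∀ a ∈ Finset.Icc (-k) k, a ∉ Finset.Icc (ctr k - 3) (ctr k + 3) → f a + f (- bb k a) = 0)
    (h7 : f (ctr k - 3) + (f (ctr k - 2) + (f (ctr k - 1) + (f (ctr k) + (f (ctr k + 1) + (f (ctr k + 2) + f (ctr k + 3)))))) = 0) :
    ∑ a ∈ Finset.Icc (-k) k, f a = 0 := by
  have hsub : Finset.Icc (ctr k - 3) (ctr k + 3) ⊆ Finset.Icc (-k) k := by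
    intro x
    simp only [Finset.mem_Icc, ctr]
    split_ifs <;> omega
  rw [← Finset.sum_sdiff hsub, sum_Icc7, h7, add_zero]
  refine Finset.sum_involution (fun a _ => - bb k a) ?_ ?_ ?_ ?_
  · intro a ha
    rw [Finset.mem_sdiff] at ha
    exact h a ha.1 ha.2
  · intro a ha _
    simp only [Finset.mem_sdiff, Finset.mem_Icc, bb, ctr] at *
    split_ifs at * <;> omega
  · intro a ha
    simp only [Finset.mem_sdiff, Finset.mem_Icc, bb, ctr] at *
    split_ifs at * <;> omega
  · intro a ha
    simp only [Finset.mem_sdiff, Finset.mem_Icc, bb, ctr] at *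
    split_ifs at * <;> omega

theorem good_triple_large (m k v : ℤ) (hk : 6 ≤ k) (hv : 0 < v) :
    Good m k {0, v, -v} (fun _ => 0) := by
  have far : ∀ r a, a ∈ Finset.Icc (-k) k → a ∉ Finset.Icc (ctr k - 3) (ctr k + 3) →
      TT k r a = (if a < - bb k a then r else -r) ∧
      TT k r (- bb k a) = (if a < - bb k a then -r else r) ∧ - bb k (- bb k a) = a := by
    intro r a ha hn
    have hb : - bb k a ∉ Finset.Icc (ctr k - 3) (ctr k + 3) ∧ - bb k (- bb k a) = a ∧ a ≠ - bb k a := by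
      simp only [Finset.mem_Icc, bb, ctr] at *
      split_ifs at * <;> omega
    obtain ⟨hb, hbb, hne⟩ := hb
    rw [Finset.mem_Icc] at hn hb
    have far' : ∀ a, ¬ (ctr k - 3 ≤ a ∧ a ≤ ctr k + 3) → TT k r a = (if a < - bb k a then r else -r) := by
      intro a h
      unfold TT
      rw [if_neg (by omega), if_neg (by omega), if_neg (by omega), if_neg (by omega), if_neg (by omega)]
    refine ⟨far' a hn, ?_, hbb⟩
    rw [far' _ hb, hbb]
    split_ifs <;> omega
  have near : ∀ r, TT k r (ctr k) = r ∧
      TT k r (ctr k + 1) = (if r = 1 then 0 else if r = 0 then -1 else 1) ∧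
      TT k r (ctr k + 2) = (if r = 1 then 0 else if r = 0 then -1 else 1) ∧
      TT k r (ctr k - 1) = (if r = 1 then -1 else if r = 0 then 1 else 0) ∧
      TT k r (ctr k - 2) = (if r = 1 then -1 else if r = 0 then 1 else 0) ∧
      TT k r (ctr k + 3) = (if r = 1 then 1 else if r = 0 then -1 else 0) ∧
      TT k r (ctr k - 3) = (if r = 1 then 0 else if r = 0 then 1 else -1) := by
    intro r
    unfold TT
    refine ⟨?_, ?_, ?_, ?_, ?_, ?_, ?_⟩
    · rw [if_pos rfl]
    · rw [if_neg (by omega), if_pos (by omega)]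
    · rw [if_neg (by omega), if_pos (by omega)]
    · rw [if_neg (by omega), if_neg (by omega), if_pos (by omega)]
    · rw [if_neg (by omega), if_neg (by omega), if_pos (by omega)]
    · rw [if_neg (by omega), if_neg (by omega), if_neg (by omega), if_pos (by omega)]
    · rw [if_neg (by omega), if_neg (by omega), if_neg (by omega), if_neg (by omega), if_pos (by omega)]
  have bnear : ∀ d, -3 ≤ d → d ≤ 3 → bb k (ctr k + d) = d - ctr k := by
    intro d h1 h2
    simp only [bb, ctr]
    split_ifs <;> omega
  have b0 := bnear 0 (by norm_num) (by norm_num)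
  have b1 := bnear 1 (by norm_num) (by norm_num)
  have b2 := bnear 2 (by norm_num) (by norm_num)
  have b3 := bnear 3 (by norm_num) (by norm_num)
  have b4 := bnear (-1) (by norm_num) (by norm_num)
  have b5 := bnear (-2) (by norm_num) (by norm_num)
  have b6 := bnear (-3) (by norm_num) (by norm_num)
  rw [add_zero] at b0
  rw [← sub_eq_add_neg] at b4 b5 b6
  apply good_triple m k v (by omega) hv (TT k)
  · intro a ha
    simp only [TT, if_true, show ¬ ((0 : ℤ) = 1) by norm_num, show ¬ ((-1 : ℤ) = 1) by norm_num,
      show ¬ ((-1 : ℤ) = 0) by norm_num, if_false]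
    split_ifs <;> norm_num
  · intro r hr
    apply sum_mirror k hk
    · intro a ha hn
      obtain ⟨e1, e2, _⟩ := far r a ha hn
      rw [e1, e2]
      split_ifs <;> ring
    · obtain ⟨n0, n1, n2, n3, n4, n5, n6⟩ := near r
      rw [n0, n1, n2, n3, n4, n5, n6]
      rcases hr with rfl | rfl | rfl <;> simp
  · intro r hr
    apply sum_mirror k hk
    · intro a ha hn
      obtain ⟨e1, e2, e3⟩ := far r a ha hn
      rw [e1, e2]
      have e3 : bb k (- bb k a) = -a := by linarith
      rcases hr with rfl | rfl | rfl <;> split_ifs <;> simp [ty, e3]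
    · obtain ⟨n0, n1, n2, n3, n4, n5, n6⟩ := near r
      rw [n0, n1, n2, n3, n4, n5, n6]
      rcases hr with rfl | rfl | rfl <;> simp [ty, b0, b1, b2, b3, b4, b5, b6] <;> ring

/-- lookup -/
def lk (L : List (ℤ × ℤ × ℤ)) (k r a : ℤ) : ℤ :=
  let x := L.getD (a + k).toNat (0, 0, 0)
  if r = 1 then x.1 else if r = 0 then x.2.1 else x.2.2

theorem good_triple_3 (m v : ℤ) (hv : 0 < v) : Good m 3 {0, v, -v} (fun _ => 0) := by
  apply good_triple m 3 v (by norm_num) hv (lk [(1,0,-1),(1,-1,0),(-1,0,1),(-1,1,0),(1,-1,0),(0,1,-1),(-1,0,1)] 3)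
  · decide
  · rintro r (rfl | rfl | rfl) <;> decide
  · rintro r (rfl | rfl | rfl) <;> decide

theorem good_triple_4 (m v : ℤ) (hv : 0 < v) : Good m 4 {0, v, -v} (fun _ => 0) := by
  apply good_triple m 4 v (by norm_num) hv (lk [(1,0,-1),(1,0,-1),(1,0,-1),(-1,1,0),(-1,1,0),(0,-1,1),(0,-1,1),(0,-1,1),(-1,1,0)] 4)
  · decide
  · rintro r (rfl | rfl | rfl) <;> decide
  · rintro r (rfl | rfl | rfl) <;> decide

theorem good_triple_5 (m v : ℤ) (hv : 0 < v) : Good m 5 {0, v, -v} (fun _ => 0) := by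
  apply good_triple m 5 v (by norm_num) hv (lk [(1,0,-1),(1,0,-1),(1,0,-1),(-1,1,0),(-1,1,0),(-1,1,0),(-1,0,1),(1,-1,0),(0,-1,1),(-1,0,1),(1,-1,0)] 5)
  · decide
  · rintro r (rfl | rfl | rfl) <;> decide
  · rintro r (rfl | rfl | rfl) <;> decide

theorem good_triple_all (m k v : ℤ) (hk : 3 ≤ k) (hv : 0 < v) : Good m k {0, v, -v} (fun _ => 0) := by
  by_cases c : 6 ≤ k
  · exact good_triple_large m k v c hv
  · have : k = 3 ∨ k = 4 ∨ k = 5 := by omega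
    rcases this with rfl | rfl | rfl
    · exact good_triple_3 m v hv
    · exact good_triple_4 m v hv
    · exact good_triple_5 m v hv

theorem good_union0 (m k : ℤ) (X X' Z : Finset ℤ) (hd : ∀ x, x ∈ X → x ∈ X' → False)
    (hZ : ∀ x, x ∈ Z ↔ x ∈ X ∨ x ∈ X')
    (h : Good m k X (fun _ => 0)) (h' : Good m k X' (fun _ => 0)) : Good m k Z (fun _ => 0) := by
  have := good_union m k X X' _ _ (Finset.disjoint_left.2 (fun x a b => hd x a b)) h h'
  rw [show Z = X ∪ X' by ext x; rw [hZ, Finset.mem_union]]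
  simpa using this

theorem good_all (m k h : ℤ) (s : ℕ) (h0 : 1 ≤ h) (hs : 1 ≤ s) (hk : k = h + s) (hm : m = 2 * h + 1)
    (hk3 : 3 ≤ k) : ∀ n : ℕ, 1 ≤ n → (n : ℤ) ≤ h → Good m k (Finset.Icc (-(n : ℤ)) n) (fun _ => 0) := by
  have ev := fun v hv hvh he => good_even m k h v s h0 hs hk hm hv hvh he
  have od := fun v w hv hvh ho hw hwh hwo hvw => good_odd m k h v w s h0 hs hk hm hv hvh ho hw hwh hwo hvw
  have tr := fun v hv => good_triple_all m k v hk3 hv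
  intro n
  induction n using Nat.strong_induction_on with
  | _ n ih =>
    intro hn hnh
    have step : ∀ n : ℕ, 1 ≤ n → (n : ℤ) + 1 ≤ h → n % 2 = 1 → Good m k (Finset.Icc (-(n : ℤ)) n) (fun _ => 0) →
        Good m k (Finset.Icc (-((n + 1 : ℕ) : ℤ)) (n + 1 : ℕ)) (fun _ => 0) := by
      intro n hn hh hp hg
      refine good_union0 m k _ _ _ ?_ ?_ hg (ev (n + 1) (by omega) hh (by omega))
      · intro x
        simp only [Finset.mem_insert, Finset.mem_singleton, Finset.mem_Icc]
        omega
      · intro x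
        simp only [Finset.mem_insert, Finset.mem_singleton, Finset.mem_Icc]
        omega
    by_cases c1 : n = 1
    · subst c1
      have : Finset.Icc (-((1 : ℕ) : ℤ)) (1 : ℕ) = {0, 1, -1} := by decide
      rw [this]
      exact tr 1 (by norm_num)
    by_cases c2 : n % 2 = 0
    · obtain ⟨l, rfl⟩ : ∃ l, n = l + 1 := ⟨n - 1, by omega⟩
      exact step l (by omega) (by push_cast at hnh; linarith) (by omega)
        (ih l (by omega) (by omega) (by push_cast at hnh; linarith))
    by_cases c3 : n = 3
    · subst c3
      refine good_union0 m k _ _ _ ?_ ?_ (tr 2 (by norm_num)) (od 1 3 (by norm_num) (by omega) (by norm_num)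
        (by norm_num) (by omega) (by norm_num) (by norm_num))
      · intro x
        simp only [Finset.mem_insert, Finset.mem_singleton, Finset.mem_union]
        omega
      · intro x
        simp only [Finset.mem_insert, Finset.mem_singleton, Finset.mem_Icc, Finset.mem_union]
        omega
    · obtain ⟨l, rfl⟩ : ∃ l, n = l + 4 := ⟨n - 4, by omega⟩
      push_cast at hnh
      have g1 := ih l (by omega) (by omega) (by linarith)
      have g2 := step l (by omega) (by linarith) (by omega) g1
      have g3 := ev (l + 3) (by omega) (by linarith) (by omega)
      have g4 := od (l + 2) (l + 4) (by omega) (by linarith) (by omega) (by omega) (by linarith) (by omega) (by omega)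
      have g5 : Good m k ({(l : ℤ) + 3, -((l : ℤ) + 3)} ∪ ({(l : ℤ) + 2, -((l : ℤ) + 2)} ∪ {(l : ℤ) + 4, -((l : ℤ) + 4)})) (fun _ => 0) := by
        refine good_union0 m k _ _ _ ?_ ?_ g3 g4
        · intro x
          simp only [Finset.mem_insert, Finset.mem_singleton, Finset.mem_union]
          omega
        · intro x
          simp only [Finset.mem_union]
      refine good_union0 m k _ _ _ ?_ ?_ g2 g5
      · intro x
        simp only [Finset.mem_insert, Finset.mem_singleton, Finset.mem_union, Finset.mem_Icc]
        omega
      · intro x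
        simp only [Finset.mem_insert, Finset.mem_singleton, Finset.mem_Icc, Finset.mem_union]
        omega

theorem sum_shift (h : ℕ) (F : ℤ → ℤ) : ∑ i ∈ Finset.range (2 * h + 1), F ((i : ℤ) - h) =
    ∑ r ∈ Finset.Icc (-(h : ℤ)) h, F r := by
  refine Finset.sum_nbij' (fun i => (i : ℤ) - h) (fun r => (r + h).toNat) ?_ ?_ ?_ ?_ ?_
  · intro i hi; simp only [Finset.mem_range, Finset.mem_Icc] at *; omega
  · intro i hi; simp only [Finset.mem_range, Finset.mem_Icc] at *; omega
  · intro i hi; simp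
  · intro i hi; simp only [Finset.mem_Icc] at *; omega
  · intro i hi; rfl

theorem magic_of_good (h k : ℕ) (hg : Good (2 * h + 1) k (Finset.Icc (-(h : ℤ)) h) (fun _ => 0)) :
    Magic (2 * h + 1) (2 * k + 1) := by
  obtain ⟨f, g, a1, a2, a3, a4⟩ := hg
  have mi : ∀ (h : ℕ) i, i < 2 * h + 1 → (i : ℤ) - h ∈ Finset.Icc (-(h : ℤ)) h := by
    intro h i hi; rw [Finset.mem_Icc]; omega
  refine ⟨fun i j => 2 * ((2 * h + 1) * g (i - h) (j - k) + f (i - h) (j - k)), ⟨?_, ?_⟩, ?_, ?_⟩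
  · intro i j hi hj
    obtain ⟨b1, b2⟩ := a1 _ (mi h i hi) _ (mi k j hj)
    rw [Finset.mem_Icc] at b1 b2
    set x := f (i - h) (j - k)
    set y := g (i - h) (j - k)
    have hh : (0 : ℤ) ≤ 2 * h + 1 := by positivity
    constructor
    · have c1 := mul_le_mul_of_nonneg_left b2.1 hh
      have c2 := mul_le_mul_of_nonneg_left b2.2 hh
      rw [abs_lt]
      push_cast
      constructor <;> nlinarith
    · have : ((2 * h + 1 : ℕ) : ℤ) * (2 * k + 1 : ℕ) = 2 * (2 * (h * k) + h + k) + 1 := by push_cast; ring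
      rw [this]
      change (2 * ((2 * (h : ℤ) + 1) * y + x) + (2 * (2 * ((h : ℤ) * k) + h + k) + 1)) % 2 = 1
      generalize (2 * (h : ℤ) + 1) * y + x = z
      generalize 2 * ((h : ℤ) * k) + h + k = w
      omega
  · intro i j i' j' hi hj hi' hj' e
    have b1 := (a1 _ (mi h i hi) _ (mi k j hj)).1
    have b2 := (a1 _ (mi h i' hi') _ (mi k j' hj')).1
    rw [Finset.mem_Icc] at b1 b2
    dsimp only at e
    obtain ⟨e1, e2⟩ := mul_add_inj (2 * h + 1) (g (i - h) (j - k)) (f (i - h) (j - k) + h)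
      (g (i' - h) (j' - k)) (f (i' - h) (j' - k) + h) (by linarith) (by linarith) (by linarith) (by linarith) (by linarith)
    have := a2 _ (mi h i hi) _ (mi k j hj) _ (mi h i' hi') _ (mi k j' hj') (by linarith) e1
    omega
  · intro j hj
    have := a3 _ (mi k j hj)
    dsimp only at this
    rw [← Finset.mul_sum, sum_shift h (fun r => (2 * h + 1) * g r (j - k) + f r (j - k)), this, mul_zero]
  · intro i hi
    have := a4 _ (mi h i hi)
    rw [← Finset.mul_sum, sum_shift k (fun r => (2 * h + 1) * g (i - h) r + f (i - h) r), this, mul_zero]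

theorem magic_35 : Magic 3 5 := by
  refine ⟨fun i j => ((([[-14, -12, 6, 12, 8], [0, 2, 4, -4, -2], [14, 10, -10, -8, -6]] : List (List ℤ)).getD i []).getD j 0), ⟨?_, ?_⟩, ?_, ?_⟩
  · intro i j hi hj
    interval_cases i <;> interval_cases j <;> simp
  · intro i j i' j' hi hj hi' hj' e
    interval_cases i <;> interval_cases j <;> interval_cases i' <;> interval_cases j' <;> simp at e <;> simp
  · intro j hj
    interval_cases j <;> simp [Finset.sum_range_succ]
  · intro i hi
    interval_cases i <;> simp [Finset.sum_range_succ]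

theorem magic_odd (p q : ℕ) (hp : 2 ≤ p) (hpq : p < q) (h1 : p % 2 = 1) (h2 : q % 2 = 1) :
    Magic p q := by
  obtain ⟨h, rfl⟩ : ∃ a, p = 2 * a + 1 := ⟨p / 2, by omega⟩
  obtain ⟨k, rfl⟩ : ∃ b, q = 2 * b + 1 := ⟨q / 2, by omega⟩
  by_cases c : k = 2
  · obtain rfl : h = 1 := by omega
    subst c
    exact magic_35
  · apply magic_of_good
    exact good_all _ _ h (k - h) (by omega) (by omega) (by omega) rfl (by omega) h (by omega) (by omega)

theorem chi_eq {V : Type*} (G : SimpleGraph V) (c : ℕ) (h1 : ∃ f, IsLocalAntimagic G f ∧ colorCount G f ≤ c)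
    (h2 : ∀ f, IsLocalAntimagic G f → c ≤ colorCount G f) : chiLA G = c := by
  obtain ⟨f, hf, hc⟩ := h1
  have e : colorCount G f = c := le_antisymm hc (h2 f hf)
  apply le_antisymm
  · exact Nat.sInf_le ⟨f, hf, e⟩
  · obtain ⟨f', hf', e'⟩ := Nat.sInf_mem (s := { n | ∃ f, IsLocalAntimagic G f ∧ colorCount G f = n }) ⟨c, f, hf, e⟩
    have := h2 f' hf'
    rw [e'] at this
    exact this

theorem star_lower (q : ℕ) (f : Sym2 (Fin 1 ⊕ Fin q) → ℕ)
    (hf : IsLocalAntimagic (completeBipartiteGraph (Fin 1) (Fin q)) f) :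
    q + 1 ≤ colorCount (completeBipartiteGraph (Fin 1) (Fin q)) f := by
  have inj : Function.Injective (vertexSum (completeBipartiteGraph (Fin 1) (Fin q)) f) := by
    obtain ⟨⟨h1, h2⟩, _⟩ := (isLA_iff 1 q f).1 hf
    rintro (a | a) (b | b) h
    · rw [Subsingleton.elim a b]
    · exact absurd h (hf.2 _ _ (by simp [completeBipartiteGraph]))
    · exact absurd h (hf.2 _ _ (by simp [completeBipartiteGraph]))
    · rw [vertexSum_inr, vertexSum_inr] at h
      simp only [Finset.univ_unique, Finset.sum_singleton] at h
      have := @h2 (default, a) (default, b) h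
      simpa using this
  unfold colorCount
  rw [← Set.image_univ, Set.ncard_image_of_injective _ inj, Set.ncard_univ]
  simp [add_comm]

theorem star_upper (q : ℕ) (hq : 2 ≤ q) :
    ∃ f, IsLocalAntimagic (completeBipartiteGraph (Fin 1) (Fin q)) f ∧
      colorCount (completeBipartiteGraph (Fin 1) (Fin q)) f ≤ q + 1 := by
  have hS := sum_range_int q
  have hsum : ∑ j ∈ Finset.range q, (2 * (j : ℤ) + 1 - q) = 0 := by
    rw [Finset.sum_sub_distrib, Finset.sum_add_distrib, ← Finset.mul_sum, hS]
    simp; ring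
  have hq' : (2 : ℤ) ≤ q := by exact_mod_cast hq
  have := chi_le 1 q (fun _ j => 2 * (j : ℤ) + 1 - q) ⟨?_, ?_⟩
    (insert ((q : ℤ) * (q + 1)) ((Finset.range q).image (fun j : ℕ => 2 * (j : ℤ) + 1 - q + (q + 1)))) ?_ ?_ ?_
  · obtain ⟨f, hf, hc⟩ := this
    refine ⟨f, hf, hc.trans ((Finset.card_insert_le _ _).trans ?_)⟩
    have := Finset.card_image_le (s := Finset.range q) (f := fun j : ℕ => 2 * (j : ℤ) + 1 - q + (q + 1))
    simp only [Finset.card_range] at this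
    omega
  · intro i j hi hj
    have : (j : ℤ) < q := by exact_mod_cast hj
    rw [abs_lt]
    refine ⟨⟨?_, ?_⟩, ?_⟩ <;> push_cast <;> omega
  · intro i j i' j' hi hj hi' hj' e
    dsimp only at e
    omega
  · intro i j hi hj
    have hj : (j : ℤ) < q := by exact_mod_cast hj
    rw [hsum]
    simp only [Finset.sum_range_one, Nat.cast_one, one_mul]
    intro e
    nlinarith
  · intro i hi
    rw [hsum]; simp
  · intro j hj
    simp only [Finset.sum_range_one, Nat.cast_one, one_mul]
    apply Finset.mem_insert_of_mem
    exact Finset.mem_image.2 ⟨j, Finset.mem_range.2 hj, rfl⟩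

theorem chiLA_Kpq_classification (p q : ℕ) (hp : 1 ≤ p) (hpq : p ≤ q) (hq : 2 ≤ q) :
    chiLA (completeBipartiteGraph (Fin p) (Fin q)) =
      if p = 1 ∧ p < q then q + 1
      else if 2 ≤ p ∧ p < q ∧ p % 2 = q % 2 then 2
      else 3 := by
  split_ifs with c1 c2
  · obtain ⟨rfl, _⟩ := c1
    exact chi_eq _ _ (star_upper q hq) (star_lower q)
  · obtain ⟨a, b, c⟩ := c2
    refine chi_eq _ _ (two_of_magic p q b ?_) (fun f hf => color_ge_two p q hp (by omega) f hf)
    rcases Nat.mod_two_eq_zero_or_one p with e | e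
    · exact magic_even p q a b e (by omega)
    · exact magic_odd p q a b e (by omega)
  · have hp2 : 2 ≤ p := by omega
    refine chi_eq _ _ ?_ ?_
    · by_cases e : p % 2 = q % 2
      · obtain rfl : p = q := by omega
        rcases Nat.mod_two_eq_zero_or_one p with e | e
        · exact three_even_square p hp2 e
        · exact three_odd_square p (by omega) e
      · exact three_parity p q hp2 hq e
    · intro f hf
      by_contra hlt
      have := color_two p q hp (by omega) f hf (by omega)
      omega
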